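/- Let U ⊆ ℂ be a nonempty connected open set. Then there exists a map h = (h₁, h₂) : U → ℝ² such that h₁ and h₂ are harmonic on U and h is a proper map from U to ℝ² (the preimage under h of every compact subset of ℝ² is a compact subset of U). In particular, taking U to be the open unit disk disproves the conjecture of Schoen and Yau that no proper harmonic map exists from the unit disk onto ℝ². (This is Theorem 5.6 of the paper for planar Riemann surfaces.) -/

import Mathlib

/-- A function `u : ℂ → ℝ` is harmonic on an open set `U ⊆ ℂ` (with `ℂ`
identified with `ℝ²` via the basis `1, i`) if it is twice continuously
differentiable on `U` and its Laplacian `∂²u/∂x² + ∂²u/∂y²` vanishes on `U`. -/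
def HarmonicOnC (u : ℂ → ℝ) (U : Set ℂ) : Prop :=
  ContDiffOn ℝ 2 u U ∧
    ∀ z ∈ U,
      fderiv ℝ (fun w : ℂ => fderiv ℝ u w 1) z 1 +
        fderiv ℝ (fun w : ℂ => fderiv ℝ u w Complex.I) z Complex.I = 0

section

open Set Filter Topology MeasureTheory

/-- `HoleFree U X` says that every bounded component of the complement of `X` contains a point
outside `U`. -/
def HoleFree (U X : Set ℂ) : Prop :=
  ∀ b ∉ X, ¬ Bornology.IsBounded (connectedComponentIn Xᶜ b) ∨
    ∃ e ∈ connectedComponentIn Xᶜ b, e ∉ U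

/-- The restrictions to `K` of holomorphic functions on `U`. -/
def holomorphicRestrict (U K : Set ℂ) : Subalgebra ℂ C(K, ℂ) where
  carrier := {f | ∃ F : ℂ → ℂ, DifferentiableOn ℂ F U ∧ ∀ z : K, f z = F z}
  mul_mem' := by
    rintro f g ⟨F, hF, hf⟩ ⟨G, hG, hg⟩
    exact ⟨fun z => F z * G z, hF.mul hG, fun z => by simp [hf, hg]⟩
  add_mem' := by
    rintro f g ⟨F, hF, hf⟩ ⟨G, hG, hg⟩
    exact ⟨fun z => F z + G z, hF.add hG, fun z => by simp [hf, hg]⟩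
  algebraMap_mem' c := ⟨fun _ => c, differentiableOn_const c, fun z => by simp⟩

/-- The Cauchy kernel `z ↦ (b - z)⁻¹` as a continuous function on `K`, when `b ∉ K`. -/
noncomputable def cauchyKernel (K : Set ℂ) (b : ↥Kᶜ) : C(K, ℂ) where
  toFun z := ((b : ℂ) - z)⁻¹
  continuous_toFun := by
    refine Continuous.inv₀ (by fun_prop) fun z h => b.2 ?_
    rw [sub_eq_zero.1 h]
    exact z.2

lemma cauchyKernel_mem_closure {U K : Set ℂ} (hK : IsCompact K)
    (hKU : K ⊆ U) (h : HoleFree U K) (b : ↥Kᶜ) :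
    haveI := isCompact_iff_compactSpace.1 hK
    cauchyKernel K b ∈ (holomorphicRestrict U K).topologicalClosure := by
  have := isCompact_iff_compactSpace.1 hK
  set S := (holomorphicRestrict U K).topologicalClosure with hS
  have : IsClosed (S : Set C(K, ℂ)) := Subalgebra.isClosed_topologicalClosure _
  let ι : C(K, ℂ) := ⟨fun z => z, continuous_subtype_val⟩
  have hι : ι ∈ S := Subalgebra.le_topologicalClosure _
    ⟨fun z => z, differentiableOn_id, fun z => rfl⟩
  let x : S := ⟨ι, hι⟩
  have hx : spectrum ℂ (x : C(K, ℂ)) = K := by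
    rw [ContinuousMap.spectrum_eq_range]
    exact Subtype.range_coe
  have key : ∀ e ∉ U, e ∉ spectrum ℂ x := by
    intro e he
    rw [spectrum.notMem_iff]
    have heK : e ∈ Kᶜ := fun hh => he (hKU hh)
    have hmem : cauchyKernel K ⟨e, heK⟩ ∈ S := Subalgebra.le_topologicalClosure _
      ⟨fun z => (e - z)⁻¹, by
        refine DifferentiableOn.inv (by fun_prop) fun z hz h0 => he ?_
        rwa [sub_eq_zero.1 h0], fun z => rfl⟩
    refine IsUnit.of_mul_eq_one ⟨_, hmem⟩ ?_
    ext z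
    have : e - (z : ℂ) ≠ 0 := fun h0 => heK (by rw [sub_eq_zero.1 h0]; exact z.2)
    change (e - (z : ℂ)) * (e - z)⁻¹ = 1
    exact mul_inv_cancel₀ this
  have hb : (b : ℂ) ∉ spectrum ℂ x := by
    intro hb
    rcases h b b.2 with h1 | ⟨e, he, heU⟩
    · have := Subalgebra.spectrum_isBounded_connectedComponentIn S x hb
      rw [hx] at this
      exact h1 this
    · apply key e heU
      rw [Subalgebra.spectrum_sUnion_connectedComponentIn S x, hx]
      exact Or.inr (mem_biUnion (show (b : ℂ) ∈ spectrum ℂ x \ K from ⟨hb, b.2⟩) he)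
  rw [spectrum.notMem_iff] at hb
  obtain ⟨y, hy⟩ := hb.exists_right_inv
  have : cauchyKernel K b = y := by
    ext z
    have h0 : (b : ℂ) - (z : ℂ) ≠ 0 := fun h0 => b.2 (by rw [sub_eq_zero.1 h0]; exact z.2)
    have h1 : ((b : ℂ) - (z : ℂ)) * (y : C(K, ℂ)) z = 1 :=
      congrArg (fun f : S => (f : C(K, ℂ)) z) hy
    change ((b : ℂ) - z)⁻¹ = _
    field_simp
    rw [← h1]
  rw [this]
  exact y.2

/-- Twice the Wirtinger derivative `∂φ/∂z̄`. -/
noncomputable def dbar (φ : ℂ → ℂ) (z : ℂ) : ℂ :=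
  fderiv ℝ φ z 1 + Complex.I * fderiv ℝ φ z Complex.I

lemma dbar_mul_exp (φ : ℂ → ℂ) (z : ℂ) (θ : ℝ) :
    dbar φ z * Complex.exp (-(θ * Complex.I)) =
      fderiv ℝ φ z (Complex.exp (θ * Complex.I)) +
        Complex.I * fderiv ℝ φ z (Complex.I * Complex.exp (θ * Complex.I)) := by
  have e1 : Complex.exp (θ * Complex.I) =
      Real.cos θ • (1 : ℂ) + Real.sin θ • Complex.I := by
    simp [Complex.exp_mul_I]
  have e2 : Complex.I * Complex.exp (θ * Complex.I) =
      (-Real.sin θ) • (1 : ℂ) + Real.cos θ • Complex.I := by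
    simp only [Complex.exp_mul_I, Complex.real_smul]
    push_cast
    linear_combination Complex.sin θ * Complex.I_sq
  have e3 : Complex.exp (-(θ * Complex.I)) = Real.cos θ - Real.sin θ * Complex.I := by
    rw [← neg_mul, Complex.exp_mul_I]
    simp [sub_eq_add_neg]
  rw [e2, e1, e3, dbar]
  simp only [map_add, map_smul]
  simp only [Complex.real_smul]
  push_cast
  linear_combination (-(fderiv ℝ φ z) Complex.I * Complex.sin θ) * Complex.I_sq

lemma integrableOn_polar_of_eq_zero {G : ℝ × ℝ → ℂ} (hG : Continuous G) {R : ℝ}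
    (h0 : ∀ p : ℝ × ℝ, R < p.1 → G p = 0) :
    IntegrableOn G (Ioi (0 : ℝ) ×ˢ Ioo (-Real.pi) Real.pi) := by
  have h1 : IntegrableOn G (Icc 0 R ×ˢ Icc (-Real.pi) Real.pi) :=
    hG.continuousOn.integrableOn_compact (isCompact_Icc.prod isCompact_Icc)
  refine h1.of_forall_sdiff_eq_zero (measurableSet_Ioi.prod measurableSet_Ioo) ?_
  rintro ⟨r, θ⟩ ⟨⟨hr, hθ⟩, h2⟩
  refine h0 _ (lt_of_not_ge fun h3 => h2 ⟨⟨le_of_lt hr, h3⟩, Ioo_subset_Icc_self hθ⟩)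

/-- The Cauchy–Pompeiu formula for compactly supported functions. -/
lemma integral_dbar_mul_inv {φ : ℂ → ℂ} (hφ : ContDiff ℝ 1 φ) (hc : HasCompactSupport φ) (z : ℂ) :
    ∫ ζ, dbar φ ζ * (ζ - z)⁻¹ = -(2 * Real.pi * φ z) := by
  have hD : Continuous (fderiv ℝ φ) := hφ.continuous_fderiv (by norm_num)
  have hdiff : Differentiable ℝ φ := hφ.differentiable (by norm_num)
  let P : ℝ × ℝ → ℂ := fun p => z + p.1 * Complex.exp (p.2 * Complex.I)
  have hP : Continuous P := by fun_prop
  obtain ⟨R, hR⟩ : ∃ R, ∀ p : ℝ × ℝ, R < p.1 → P p ∉ tsupport φ := by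
    obtain ⟨R, hR⟩ := hc.isBounded.subset_closedBall z
    refine ⟨R, fun p hp hmem => ?_⟩
    have := hR hmem
    simp only [P, Metric.mem_closedBall, dist_eq_norm, add_sub_cancel_left, norm_mul,
      Complex.norm_real, Complex.norm_exp_ofReal_mul_I, mul_one, Real.norm_eq_abs] at this
    exact absurd (le_abs_self p.1) (by linarith)
  have hφ0 : ∀ p : ℝ × ℝ, R < p.1 → φ (P p) = 0 := fun p hp =>
    image_eq_zero_of_notMem_tsupport (hR p hp)
  have hD0 : ∀ p : ℝ × ℝ, R < p.1 → fderiv ℝ φ (P p) = 0 := fun p hp => by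
    have := fun hh => hR p hp (support_fderiv_subset ℝ hh)
    simpa using this
  let G₁ : ℝ × ℝ → ℂ := fun p => fderiv ℝ φ (P p) (Complex.exp (p.2 * Complex.I))
  let G₂ : ℝ × ℝ → ℂ := fun p => fderiv ℝ φ (P p) (Complex.I * Complex.exp (p.2 * Complex.I))
  have hG₁ : Continuous G₁ := (hD.comp hP).clm_apply (by fun_prop)
  have hG₂ : Continuous G₂ := (hD.comp hP).clm_apply (by fun_prop)
  have hI₁ := integrableOn_polar_of_eq_zero hG₁ (R := R) fun p hp => by simp [G₁, hD0 p hp]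
  have hI₂ := integrableOn_polar_of_eq_zero hG₂ (R := R) fun p hp => by simp [G₂, hD0 p hp]
  have hstep : ∫ ζ, dbar φ ζ * (ζ - z)⁻¹ =
      ∫ p in Ioi (0 : ℝ) ×ˢ Ioo (-Real.pi) Real.pi, (G₁ p + Complex.I * G₂ p) := by
    rw [← integral_add_left_eq_self _ z, ← Complex.integral_comp_polarCoord_symm]
    refine setIntegral_congr_fun polarCoord.open_target.measurableSet ?_
    rintro ⟨r, θ⟩ ⟨hr, -⟩
    have hr : r ≠ 0 := ne_of_gt hr
    have hE : (r : ℂ) * (Real.cos θ + Real.sin θ * Complex.I) =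
        r * Complex.exp (θ * Complex.I) := by
      simp [Complex.exp_mul_I]
    have : r • ((r : ℂ) * Complex.exp (θ * Complex.I))⁻¹ = Complex.exp (-(θ * Complex.I)) := by
      rw [Complex.exp_neg, mul_inv, Complex.real_smul, ← mul_assoc,
        mul_inv_cancel₀ (by exact_mod_cast hr), one_mul]
    simp only [Complex.polarCoord_symm_apply, hE, add_sub_cancel_left]
    rw [← mul_smul_comm, this, dbar_mul_exp]
  have hJ₁ : ∫ p in Ioi (0 : ℝ) ×ˢ Ioo (-Real.pi) Real.pi, G₁ p = -(2 * Real.pi * φ z) := by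
    rw [Measure.volume_eq_prod, ← setIntegral_prod_swap, setIntegral_prod]
    · have : ∀ θ : ℝ, ∫ r in Ioi (0 : ℝ), G₁ (r, θ) = - φ z := by
        intro θ
        have hd : ∀ r : ℝ, HasDerivAt (fun r : ℝ => φ (P (r, θ))) (G₁ (r, θ)) r := by
          intro r
          have h1 : HasDerivAt (fun r : ℝ => P (r, θ)) (Complex.exp (θ * Complex.I)) r := by
            simpa [P] using (((hasDerivAt_id r).ofReal_comp).mul_const
              (Complex.exp (θ * Complex.I))).const_add z
          exact (hdiff _).hasFDerivAt.comp_hasDerivAt r h1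
        have hint : IntegrableOn (fun r => G₁ (r, θ)) (Ioi 0) := by
          have h1 : IntegrableOn (fun r => G₁ (r, θ)) (Icc 0 R) :=
            (hG₁.comp (by fun_prop : Continuous fun r : ℝ => (r, θ))).continuousOn
              |>.integrableOn_compact isCompact_Icc
          refine h1.of_forall_sdiff_eq_zero measurableSet_Ioi ?_
          rintro r ⟨hr, h2⟩
          have : R < r := lt_of_not_ge fun h3 => h2 ⟨le_of_lt hr, h3⟩
          simp [G₁, hD0 (r, θ) this]
        have := integral_Ioi_of_hasDerivAt_of_tendsto' (a := 0) (m := 0) (fun r _ => hd r) hint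
          (tendsto_const_nhds.congr' (by
            filter_upwards [eventually_gt_atTop R] with r hr
            exact (hφ0 (r, θ) hr).symm))
        simpa [P] using this
      simp only [Prod.swap_prod_mk, this]
      simp only [integral_const, MeasurableSet.univ, measureReal_restrict_apply, univ_inter,
        Real.volume_real_Ioo_of_le (by linarith [Real.pi_pos] : -Real.pi ≤ Real.pi),
        Complex.real_smul]
      push_cast
      ring
    · rw [IntegrableOn, Measure.volume_eq_prod, ← Measure.prod_restrict] at hI₁
      rw [IntegrableOn, ← Measure.prod_restrict]
      exact hI₁.swap
  have hJ₂ : ∫ p in Ioi (0 : ℝ) ×ˢ Ioo (-Real.pi) Real.pi, G₂ p = 0 := by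
    rw [Measure.volume_eq_prod, setIntegral_prod _ hI₂]
    refine setIntegral_eq_zero_of_forall_eq_zero fun r hr => ?_
    have hr : (0 : ℝ) < r := hr
    have hd : ∀ θ : ℝ, HasDerivAt (fun θ : ℝ => φ (P (r, θ))) (r • G₂ (r, θ)) θ := by
      intro θ
      have h1 : HasDerivAt (fun θ : ℝ => P (r, θ))
          (r • (Complex.I * Complex.exp (θ * Complex.I))) θ := by
        have := ((((hasDerivAt_id θ).ofReal_comp).mul_const Complex.I).cexp.const_mul
          (r : ℂ)).const_add z
        refine this.congr_deriv ?_
        simp only [id, Complex.real_smul, Complex.ofReal_one]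
        ring
      have := (hdiff _).hasFDerivAt.comp_hasDerivAt θ h1
      rw [map_smul] at this
      exact this
    have h2 := intervalIntegral.integral_eq_sub_of_hasDerivAt (a := -Real.pi) (b := Real.pi)
      (fun θ _ => hd θ) (Continuous.intervalIntegrable (by fun_prop) _ _)
    rw [intervalIntegral.integral_smul,
      intervalIntegral.integral_of_le (by linarith [Real.pi_pos]),
      integral_Ioc_eq_integral_Ioo] at h2
    have h3 : P (r, Real.pi) = P (r, -Real.pi) := by
      simp [P, Complex.exp_neg]
    rw [h3, sub_self, smul_eq_zero] at h2
    exact h2.resolve_left hr.ne'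
  rw [hstep, integral_add hI₁ (hI₂.const_mul _), integral_const_mul, hJ₁, hJ₂]
  simp

lemma lintegral_enorm_inv_closedBall_ne_top (R : ℝ) :
    ∫⁻ ζ : ℂ, (Metric.closedBall (0 : ℂ) R).indicator (fun ζ => ‖ζ⁻¹‖ₑ) ζ ≠ ⊤ := by
  rw [← Complex.lintegral_comp_polarCoord_symm]
  have hle : ∫⁻ p in polarCoord.target, ENNReal.ofReal p.1 •
      (Metric.closedBall (0 : ℂ) R).indicator (fun ζ => ‖ζ⁻¹‖ₑ) (Complex.polarCoord.symm p) ≤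
      ∫⁻ p : ℝ × ℝ, (Icc 0 R ×ˢ Icc (-Real.pi) Real.pi).indicator 1 p := by
    rw [← lintegral_indicator polarCoord.open_target.measurableSet]
    refine lintegral_mono fun p => ?_
    refine indicator_le' (fun p hp => ?_) (fun p hp => by simp) p
    obtain ⟨r, θ⟩ := p
    have hr : (0 : ℝ) < r := hp.1
    have hn : ‖Complex.polarCoord.symm (r, θ)‖ = r := by
      rw [Complex.norm_polarCoord_symm, abs_of_pos hr]
    by_cases hR : r ≤ R
    · have h1 : Complex.polarCoord.symm (r, θ) ∈ Metric.closedBall (0 : ℂ) R := by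
        rw [mem_closedBall_zero_iff, hn]; exact hR
      have h2 : (r, θ) ∈ Icc 0 R ×ˢ Icc (-Real.pi) Real.pi :=
        ⟨⟨hr.le, hR⟩, Ioo_subset_Icc_self hp.2⟩
      rw [indicator_of_mem h1, indicator_of_mem h2, ← ofReal_norm, norm_inv, hn,
        smul_eq_mul, ← ENNReal.ofReal_mul hr.le, mul_inv_cancel₀ hr.ne']
      simp
    · have h1 : Complex.polarCoord.symm (r, θ) ∉ Metric.closedBall (0 : ℂ) R := by
        rw [mem_closedBall_zero_iff, hn]; exact hR
      rw [indicator_of_notMem h1]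
      simp
  refine ne_top_of_le_ne_top ?_ hle
  rw [lintegral_indicator_one (measurableSet_Icc.prod measurableSet_Icc)]
  exact (isCompact_Icc.prod isCompact_Icc).measure_lt_top.ne

lemma setLIntegral_enorm_inv_sub (N : Set ℂ) (z : ℂ) {R : ℝ} (hN : MeasurableSet N)
    (h : ∀ ζ ∈ N, ‖ζ - z‖ ≤ R) :
    ∫⁻ ζ in N, ‖(ζ - z)⁻¹‖ₑ = ∫⁻ ζ in (fun w => w + z) ⁻¹' N,
      (Metric.closedBall (0 : ℂ) R).indicator (fun ζ => ‖ζ⁻¹‖ₑ) ζ := by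
  have hN' : MeasurableSet ((fun w => w + z) ⁻¹' N) := hN.preimage (measurable_add_const z)
  rw [← lintegral_indicator hN, ← lintegral_indicator hN',
    ← lintegral_add_right_eq_self _ z]
  refine lintegral_congr fun w => ?_
  by_cases hw : w + z ∈ N
  · have hw' : w ∈ (fun w => w + z) ⁻¹' N := hw
    have hb : w ∈ Metric.closedBall (0 : ℂ) R := by
      rw [mem_closedBall_zero_iff]; simpa using h _ hw
    rw [indicator_of_mem hw, indicator_of_mem hw', indicator_of_mem hb, add_sub_cancel_right]
  · have hw' : w ∉ (fun w => w + z) ⁻¹' N := hw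
    rw [indicator_of_notMem hw, indicator_of_notMem hw']

lemma exists_setLIntegral_enorm_inv_sub_lt (R : ℝ) {ε : ENNReal} (hε : ε ≠ 0) :
    ∃ δ > 0, ∀ (N : Set ℂ) (z : ℂ), MeasurableSet N → (∀ ζ ∈ N, ‖ζ - z‖ ≤ R) → volume N < δ →
      ∫⁻ ζ in N, ‖(ζ - z)⁻¹‖ₑ < ε := by
  obtain ⟨δ, hδ, h⟩ := exists_pos_setLIntegral_lt_of_measure_lt
    (lintegral_enorm_inv_closedBall_ne_top R) hε
  refine ⟨δ, hδ, fun N z hN hR hv => ?_⟩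
  rw [setLIntegral_enorm_inv_sub N z hN hR]
  refine h _ ?_
  rwa [measure_preimage_add_right]

lemma integrable_mul_inv_sub {g : ℂ → ℂ} (hg : Continuous g) (hc : HasCompactSupport g) (z : ℂ) :
    Integrable fun ζ => g ζ * (ζ - z)⁻¹ := by
  have hsupp : Function.support (fun ζ => g ζ * (ζ - z)⁻¹) ⊆ tsupport g := fun ζ hζ =>
    subset_tsupport _ fun h0 => hζ (by simp [h0])
  rw [← integrableOn_iff_integrable_of_support_subset hsupp]
  obtain ⟨B, hB⟩ := hg.bounded_above_of_compact_support hc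
  obtain ⟨R, hR⟩ := hc.isBounded.subset_closedBall z
  have hmeas : MeasurableSet (tsupport g) := (isClosed_tsupport g).measurableSet
  have h1 : IntegrableOn (fun ζ => (ζ - z)⁻¹) (tsupport g) := by
    refine ⟨by fun_prop, ?_⟩
    rw [hasFiniteIntegral_iff_enorm, setLIntegral_enorm_inv_sub _ z hmeas (R := R)
      fun ζ hζ => by simpa [dist_eq_norm] using hR hζ]
    exact (setLIntegral_le_lintegral _ _).trans_lt
      (lintegral_enorm_inv_closedBall_ne_top R).lt_top
  exact h1.bdd_mul (c := B) hg.aestronglyMeasurable (Eventually.of_forall hB)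

/-- The Cauchy kernel, extended by zero to `K`. -/
noncomputable def cauchyKernelExt (K : Set ℂ) (ζ : ℂ) : C(K, ℂ) :=
  open Classical in if h : ζ ∈ Kᶜ then cauchyKernel K ⟨ζ, h⟩ else 0

lemma cauchyKernelExt_apply {K : Set ℂ} {ζ : ℂ} (h : ζ ∉ K) (z : K) :
    cauchyKernelExt K ζ z = (ζ - z)⁻¹ := by
  rw [cauchyKernelExt, dif_pos (show ζ ∈ Kᶜ from h)]
  rfl

lemma continuousOn_cauchyKernelExt (K : Set ℂ) : ContinuousOn (cauchyKernelExt K) Kᶜ := by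
  rw [continuousOn_iff_continuous_domRestrict]
  have h : Continuous fun p : ↥Kᶜ × K => ((p.1 : ℂ) - p.2)⁻¹ := by
    refine Continuous.inv₀ (by fun_prop) fun p h => p.1.2 ?_
    rw [sub_eq_zero.1 h]
    exact p.2.2
  have h2 := (ContinuousMap.curry ⟨_, h⟩).continuous
  convert h2 using 1
  ext b z
  exact cauchyKernelExt_apply b.2 z

lemma integral_mem_of_isClosed {E : Type*} [NormedAddCommGroup E] [NormedSpace ℂ E]
    [CompleteSpace E] (S : Submodule ℂ E) (hS : IsClosed (S : Set E)) {μ : Measure ℂ} {f : ℂ → E}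
    (hf : Integrable f μ) (h : ∀ᵐ x ∂μ, f x ∈ S) : ∫ x, f x ∂μ ∈ S := by
  have := hS
  rw [← Submodule.Quotient.mk_eq_zero S]
  change S.mkQL _ = 0
  rw [← ContinuousLinearMap.integral_comp_comm _ hf]
  refine integral_eq_zero_of_ae (h.mono fun x hx => ?_)
  simpa using hx

/-- Runge-type approximation of a smooth function which is holomorphic on `K` almost
everywhere to first order. -/
lemma exists_holomorphic_approx {U K : Set ℂ} (hK : IsCompact K) (hKU : K ⊆ U)
    (h : HoleFree U K) {φ : ℂ → ℂ} (hφ : ContDiff ℝ 1 φ) (hc : HasCompactSupport φ)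
    (h0 : ∀ᵐ ζ, ζ ∈ K → dbar φ ζ = 0) {ε : ℝ} (hε : 0 < ε) :
    ∃ c : ℂ → ℂ, DifferentiableOn ℂ c U ∧ ∀ z ∈ K, ‖c z - φ z‖ < ε := by
  have hcs := isCompact_iff_compactSpace.1 hK
  have hD : Continuous (fderiv ℝ φ) := hφ.continuous_fderiv (by norm_num)
  set g : ℂ → ℂ := dbar φ with hgdef
  have hg : Continuous g := by
    have : g = fun z => fderiv ℝ φ z 1 + Complex.I * fderiv ℝ φ z Complex.I := rfl
    rw [this]
    exact (hD.clm_apply continuous_const).add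
      (continuous_const.mul (hD.clm_apply continuous_const))
  have hgc : HasCompactSupport g := by
    refine (hc.fderiv ℝ).mono fun z hz hz0 => hz ?_
    simp [hgdef, dbar, hz0]
  obtain ⟨B, hB⟩ := hg.bounded_above_of_compact_support hgc
  have hB0 : 0 ≤ B := (norm_nonneg _).trans (hB 0)
  obtain ⟨R, hR⟩ := (hgc.isBounded.union hK.isBounded).subset_closedBall 0
  set ε₁ : ℝ := ε / (B + 1) with hε₁
  have hε₁0 : 0 < ε₁ := by positivity
  obtain ⟨δ, hδ, hsmall⟩ := exists_setLIntegral_enorm_inv_sub_lt (2 * R)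
    (ε := ENNReal.ofReal ε₁) (by simpa using hε₁0)
  obtain ⟨η, hη0, hη⟩ : ∃ η > 0, volume (Metric.thickening η K \ K) < δ := by
    have hfin : volume (Metric.thickening 1 K) ≠ ⊤ :=
      (hK.isBounded.thickening).measure_lt_top.ne
    have ht := tendsto_measure_thickening_of_isClosed (μ := volume) ⟨1, one_pos, hfin⟩ hK.isClosed
    have hlt : volume K < volume K + δ := ENNReal.lt_add_right hK.measure_lt_top.ne hδ.ne'
    obtain ⟨η, hη1, hη2⟩ := ((ht.eventually (gt_mem_nhds hlt)).and
      (self_mem_nhdsWithin)).exists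
    refine ⟨η, hη2, ?_⟩
    rw [measure_sdiff (Metric.self_subset_thickening hη2 K) hK.measurableSet.nullMeasurableSet
      hK.measure_lt_top.ne]
    exact ENNReal.sub_lt_of_lt_add (measure_mono (Metric.self_subset_thickening hη2 K))
      (by rwa [add_comm])
  set C : Set ℂ := tsupport g \ Metric.thickening η K with hCdef
  have hC : IsCompact C := hgc.diff Metric.isOpen_thickening
  have hCK : C ⊆ Kᶜ := fun ζ hζ hk => hζ.2 (Metric.self_subset_thickening hη0 K hk)
  have hint : IntegrableOn (fun ζ => g ζ • cauchyKernelExt K ζ) C :=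
    (hg.continuousOn.smul ((continuousOn_cauchyKernelExt K).mono hCK)).integrableOn_compact hC
  set S := (holomorphicRestrict U K).topologicalClosure with hS
  have hI : ∫ ζ in C, g ζ • cauchyKernelExt K ζ ∈ Subalgebra.toSubmodule S := by
    refine integral_mem_of_isClosed _ (Subalgebra.isClosed_topologicalClosure _) hint ?_
    filter_upwards [ae_restrict_mem hC.measurableSet] with ζ hζ
    refine Submodule.smul_mem _ _ ?_
    rw [cauchyKernelExt, dif_pos (hCK hζ)]
    exact cauchyKernel_mem_closure hK hKU h _
  have hI2 : (-(2 * Real.pi : ℂ)⁻¹) • ∫ ζ in C, g ζ • cauchyKernelExt K ζ ∈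
      Subalgebra.toSubmodule S := Submodule.smul_mem _ _ hI
  obtain ⟨f, ⟨c, hcd, hcf⟩, hf⟩ := Metric.mem_closure_iff.1
    (show _ ∈ closure (holomorphicRestrict U K : Set C(K, ℂ)) from hI2) (ε / 2) (half_pos hε)
  refine ⟨c, hcd, fun z hz => ?_⟩
  have h1 := (ContinuousMap.dist_apply_le_dist (⟨z, hz⟩ : K)).trans_lt hf
  have hev : (∫ ζ in C, g ζ • cauchyKernelExt K ζ) (⟨z, hz⟩ : K) = ∫ ζ in C, g ζ * (ζ - z)⁻¹ := by
    have := (ContinuousMap.evalCLM ℂ (⟨z, hz⟩ : K)).integral_comp_comm hint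
    refine this.symm.trans (setIntegral_congr_fun hC.measurableSet fun ζ hζ => ?_)
    change g ζ * cauchyKernelExt K ζ ⟨z, hz⟩ = _
    rw [cauchyKernelExt_apply (hCK hζ)]
  rw [hcf, ContinuousMap.smul_apply, hev, dist_eq_norm, smul_eq_mul] at h1
  have h2 := integral_dbar_mul_inv hφ hc z
  rw [← integral_add_compl hC.measurableSet (integrable_mul_inv_sub hg hgc z)] at h2
  have h3 : ‖∫ ζ in Cᶜ, g ζ * (ζ - z)⁻¹‖ ≤ ε := by
    set N : Set ℂ := tsupport g ∩ (Metric.thickening η K \ K) with hN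
    have hNm : MeasurableSet N := (isClosed_tsupport g).measurableSet.inter
      (Metric.isOpen_thickening.measurableSet.diff hK.measurableSet)
    have e1 : ∫⁻ ζ in Cᶜ, ‖g ζ * (ζ - z)⁻¹‖ₑ ≤ ∫⁻ ζ in N, ENNReal.ofReal B * ‖(ζ - z)⁻¹‖ₑ := by
      rw [← lintegral_indicator hC.measurableSet.compl, ← lintegral_indicator hNm]
      refine lintegral_mono_ae ?_
      filter_upwards [h0] with ζ hζ
      by_cases hgz : g ζ = 0
      · simp [hgz, indicator]
      · by_cases hζC : ζ ∈ C
        · simp [hζC]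
        · have hζN : ζ ∈ N := by
            have ht : ζ ∈ tsupport g := subset_tsupport _ hgz
            refine ⟨ht, ?_, fun hk => hgz (hζ hk)⟩
            by_contra hcon
            exact hζC ⟨ht, hcon⟩
          rw [indicator_of_mem (show ζ ∈ Cᶜ from hζC), indicator_of_mem hζN, enorm_mul]
          gcongr
          rw [← ofReal_norm]
          exact ENNReal.ofReal_le_ofReal (hB ζ)
    have e2 : ∫⁻ ζ in N, ENNReal.ofReal B * ‖(ζ - z)⁻¹‖ₑ ≤ ENNReal.ofReal ε := by
      rw [lintegral_const_mul' _ _ ENNReal.ofReal_ne_top]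
      have := hsmall N z hNm (fun ζ hζ => by
        have a1 := hR (Or.inl hζ.1)
        have a2 := hR (Or.inr hz)
        rw [mem_closedBall_zero_iff] at a1 a2
        linarith [norm_sub_le ζ z]) ((measure_mono inter_subset_right).trans_lt hη)
      calc _ ≤ ENNReal.ofReal B * ENNReal.ofReal ε₁ := by gcongr
        _ = ENNReal.ofReal (B * ε₁) := (ENNReal.ofReal_mul hB0).symm
        _ ≤ _ := by
          refine ENNReal.ofReal_le_ofReal ?_
          rw [hε₁, mul_div_assoc', div_le_iff₀ (by positivity)]
          nlinarith
    have e3 := (enorm_integral_le_lintegral_enorm _).trans (e1.trans e2)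
    rw [← ofReal_norm] at e3
    exact (ENNReal.ofReal_le_ofReal_iff hε.le).1 e3
  have hpi : (2 * Real.pi : ℂ) ≠ 0 := by
    exact_mod_cast (by positivity : (2 * Real.pi : ℝ) ≠ 0)
  have h4 : c z - φ z = -(-(2 * Real.pi : ℂ)⁻¹ * (∫ ζ in C, g ζ * (ζ - z)⁻¹) - c z) +
      (2 * Real.pi : ℂ)⁻¹ * ∫ ζ in Cᶜ, g ζ * (ζ - z)⁻¹ := by
    linear_combination (-(2 * Real.pi : ℂ)⁻¹) * h2 + φ z * inv_mul_cancel₀ hpi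
  have h5 : ‖(2 * Real.pi : ℂ)⁻¹‖ ≤ 1 / 2 := by
    rw [norm_inv, norm_mul, Complex.norm_real, Real.norm_eq_abs, abs_of_pos Real.pi_pos]
    simp only [Complex.norm_ofNat, one_div]
    gcongr
    nlinarith [Real.pi_gt_three]
  have h6 : ‖(2 * Real.pi : ℂ)⁻¹ * ∫ ζ in Cᶜ, g ζ * (ζ - z)⁻¹‖ ≤ 1 / 2 * ε := by
    rw [norm_mul]
    gcongr
  rw [← norm_neg] at h1
  rw [h4]
  exact (norm_add_le _ _).trans_lt (by linarith)

/-- Approximation of a function that is `0` on `X` and `M` on `R`. -/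
lemma exists_holomorphic_separating {U K X R : Set ℂ} (hK : IsCompact K) (hKU : K ⊆ U)
    (h : HoleFree U K) (hX : IsCompact X) (hR : IsCompact R)
    (hd : Disjoint X R) (hnull : volume (K \ (X ∪ R)) = 0) {M ε : ℝ} (hM : 0 ≤ M) (hε : 0 < ε) :
    ∃ (c : ℂ → ℂ) (κ : ℂ → ℝ), DifferentiableOn ℂ c U ∧ (∀ z, 0 ≤ κ z) ∧
      (∀ z ∈ X, κ z = 0) ∧ (∀ z ∈ R, κ z = M) ∧ ∀ z ∈ K, ‖c z - κ z‖ < ε := by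
  obtain ⟨r, hr⟩ := (hX.isBounded.union hR.isBounded).subset_ball 0
  have hdisj : Disjoint (X ∪ (Metric.ball 0 r)ᶜ) R := by
    rw [disjoint_union_left]
    refine ⟨hd, disjoint_left.2 fun z hz hzR => hz (hr (Or.inr hzR))⟩
  obtain ⟨f, hf0, hf1, hf⟩ := exists_contMDiffMap_zero_one_of_isClosed (modelWithCornersSelf ℝ ℂ)
    (n := 1) (hX.isClosed.union Metric.isOpen_ball.isClosed_compl) hR.isClosed hdisj
  have hfd : ContDiff ℝ 1 f := f.contMDiff.contDiff
  set φ : ℂ → ℂ := fun z => ((M * f z : ℝ) : ℂ) with hφ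
  have hφd : ContDiff ℝ 1 φ := Complex.ofRealCLM.contDiff.comp (contDiff_const.mul hfd)
  have hφc : HasCompactSupport φ := by
    refine HasCompactSupport.intro (isCompact_closedBall (0 : ℂ) r) fun z hz => ?_
    have : f z = 0 := hf0 (Or.inr fun hh => hz (Metric.ball_subset_closedBall hh))
    simp [hφ, this]
  have hcrit : ∀ z ∈ X ∪ R, dbar φ z = 0 := by
    intro z hz
    have hfz : fderiv ℝ f z = 0 := by
      rcases hz with hz | hz
      · refine IsLocalMin.fderiv_eq_zero (Eventually.of_forall fun w => ?_)
        rw [hf0 (Or.inl hz)]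
        exact (hf w).1
      · refine IsLocalMax.fderiv_eq_zero (Eventually.of_forall fun w => ?_)
        rw [hf1 hz]
        exact (hf w).2
    have : HasFDerivAt φ (Complex.ofRealCLM.comp (M • fderiv ℝ f z)) z :=
      Complex.ofRealCLM.hasFDerivAt.comp z
        (((hfd.differentiable (by norm_num)) z).hasFDerivAt.const_mul M)
    rw [dbar, this.fderiv, hfz]
    simp
  obtain ⟨c, hc, hcε⟩ := exists_holomorphic_approx hK hKU h hφd hφc (by
    have : ∀ᵐ ζ, ζ ∉ K \ (X ∪ R) := measure_eq_zero_iff_ae_notMem.1 hnull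
    filter_upwards [this] with ζ hζ hζK
    refine hcrit ζ ?_
    by_contra hcon
    exact hζ ⟨hζK, hcon⟩) hε
  refine ⟨c, fun z => M * f z, hc, fun z => mul_nonneg hM (hf z).1, fun z hz => ?_,
    fun z hz => ?_, hcε⟩
  · simp [hf0 (Or.inl hz : z ∈ X ∪ (Metric.ball 0 r)ᶜ)]
  · simp [hf1 hz]

lemma exists_pos_le_of_isCompact {K : Set ℂ} (hK : IsCompact K) {f : ℂ → ℝ} (hf : ContinuousOn f K)
    (h : ∀ z ∈ K, 0 < f z) : ∃ s > 0, ∀ z ∈ K, s ≤ f z := by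
  rcases K.eq_empty_or_nonempty with rfl | hne
  · exact ⟨1, one_pos, by simp⟩
  · obtain ⟨z, hz, hmin⟩ := hK.exists_isMinOn hne hf
    exact ⟨f z, h z hz, fun w hw => hmin hw⟩

lemma continuousOn_re {U K : Set ℂ} (hKU : K ⊆ U) {F : ℂ → ℂ} (hF : DifferentiableOn ℂ F U) :
    ContinuousOn (fun z => (F z).re) K :=
  Complex.continuous_re.comp_continuousOn (hF.continuousOn.mono hKU)

lemma exists_pos_forall_re_gt {U K : Set ℂ} (hK : IsCompact K) (hKU : K ⊆ U) {l : ℂ → ℝ}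
    (hl : ContinuousOn l U) {F : ℂ → ℂ} (hF : DifferentiableOn ℂ F U)
    (h : ∀ z ∈ K, l z < (F z).re) :
    ∃ ε > 0, ∀ (F' : ℂ → ℂ), ∀ z ∈ K, ‖F' z - F z‖ < ε → l z < (F' z).re := by
  obtain ⟨s, hs, hsK⟩ := exists_pos_le_of_isCompact hK
    ((continuousOn_re hKU hF).sub (hl.mono hKU)) fun z hz => sub_pos.2 (h z hz)
  refine ⟨s, hs, fun F' z hz hlt => ?_⟩
  have h1 := hsK z hz
  have h3 := (Complex.abs_re_le_norm (F' z - F z)).trans_lt hlt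
  rw [abs_lt] at h3
  simp only [Complex.sub_re, Pi.sub_apply] at h1 h3
  linarith [h3.1]

/-- The real part of one of `F`, `G` exceeds `l` at each point of `X`. -/
def Dominates (l : ℂ → ℝ) (F G : ℂ → ℂ) (X : Set ℂ) : Prop :=
  ∀ z ∈ X, l z < (F z).re ∨ l z < (G z).re

lemma Dominates.exists_pos {U K : Set ℂ} {l : ℂ → ℝ} {F G : ℂ → ℂ} (h : Dominates l F G K)
    (hK : IsCompact K) (hKU : K ⊆ U)
    (hl : ContinuousOn l U) (hF : DifferentiableOn ℂ F U) (hG : DifferentiableOn ℂ G U) :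
    ∃ ε > 0, ∀ F' G' : ℂ → ℂ, (∀ z ∈ K, ‖F' z - F z‖ < ε) → (∀ z ∈ K, ‖G' z - G z‖ < ε) →
      Dominates l F' G' K := by
  obtain ⟨s, hs, hsK⟩ := exists_pos_le_of_isCompact hK
    (((continuousOn_re hKU hF).sub (hl.mono hKU)).sup ((continuousOn_re hKU hG).sub (hl.mono hKU)))
    fun z hz => lt_sup_iff.2 ((h z hz).imp sub_pos.2 sub_pos.2)
  refine ⟨s, hs, fun F' G' h1 h2 z hz => ?_⟩
  have e1 := (Complex.abs_re_le_norm (F' z - F z)).trans_lt (h1 z hz)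
  have e2 := (Complex.abs_re_le_norm (G' z - G z)).trans_lt (h2 z hz)
  rw [abs_lt] at e1 e2
  simp only [Complex.sub_re] at e1 e2
  refine (le_sup_iff.1 (hsK z hz)).imp (fun h => ?_) (fun h => ?_) <;>
    simp only [Pi.sub_apply] at h
  · linarith [e1.1]
  · linarith [e2.1]

/-- Adding a holomorphic correction that is small on `X` and raises the real part above `l` on `R`.
-/
lemma exists_correction {U K X R : Set ℂ} (hK : IsCompact K) (hKU : K ⊆ U)
    (h : HoleFree U K) (hX : IsCompact X) (hR : IsCompact R) (hXK : X ⊆ K) (hRK : R ⊆ K)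
    (hd : Disjoint X R) (hnull : volume (K \ (X ∪ R)) = 0) {l : ℂ → ℝ} (hl : ContinuousOn l U)
    {F : ℂ → ℂ} (hF : DifferentiableOn ℂ F U) {ε : ℝ} (hε : 0 < ε) :
    ∃ F' : ℂ → ℂ, DifferentiableOn ℂ F' U ∧ (∀ z ∈ X, ‖F' z - F z‖ < ε) ∧
      (∀ z ∈ K, (F z).re - ε < (F' z).re) ∧ ∀ z ∈ R, l z < (F' z).re := by
  obtain ⟨M, hM⟩ : ∃ M, ∀ z ∈ R, l z - (F z).re ≤ M := by
    obtain ⟨M, hM⟩ := hR.bddAbove_image ((hl.mono (hRK.trans hKU)).sub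
      (continuousOn_re (hRK.trans hKU) hF))
    exact ⟨M, fun z hz => hM (mem_image_of_mem _ hz)⟩
  obtain ⟨c, κ, hc, hκ0, hκX, hκR, hcκ⟩ := exists_holomorphic_separating hK hKU h hX hR hd hnull
    (M := max M 0 + ε) (by positivity) hε
  have key : ∀ z ∈ K, κ z - ε < (c z).re := fun z hz => by
    have := (Complex.abs_re_le_norm _).trans_lt (hcκ z hz)
    rw [abs_lt] at this
    simp only [Complex.sub_re, Complex.ofReal_re] at this
    linarith [this.1]
  refine ⟨fun z => F z + c z, hF.add hc, fun z hz => ?_, fun z hz => ?_, fun z hz => ?_⟩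
  · have := hcκ z (hXK hz)
    rw [hκX z hz] at this
    simpa using this
  · rw [Complex.add_re]
    linarith [key z hz, hκ0 z]
  · have h1 := key z (hRK hz)
    rw [hκR z hz] at h1
    rw [Complex.add_re]
    linarith [hM z hz, le_max_left M 0]

lemma HoleFree.of_subset {U K Y : Set ℂ} (hY : HoleFree U Y) (hKY : K ⊆ Y)
    (h : ∀ b ∈ Y, b ∉ K → ∃ e ∉ Y, e ∈ connectedComponentIn Kᶜ b) : HoleFree U K := by
  intro b hb
  obtain ⟨e, heY, he⟩ : ∃ e ∉ Y, e ∈ connectedComponentIn Kᶜ b := by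
    by_cases hbY : b ∈ Y
    · exact h b hbY hb
    · exact ⟨b, hbY, mem_connectedComponentIn hb⟩
  rw [connectedComponentIn_eq he]
  have hsub := connectedComponentIn_mono e (compl_subset_compl.2 hKY)
  exact (hY e heY).imp (fun h1 h2 => h1 (h2.subset hsub)) fun ⟨x, hx, hxU⟩ => ⟨x, hsub hx, hxU⟩

/-- Affine coordinates on the plane. -/
structure AffineCoords where
  α : ℂ → ℝ
  β : ℂ → ℝ
  w₁ : ℂ
  w₂ : ℂ
  continuous_α : Continuous α
  continuous_β : Continuous β
  α_add : ∀ (z : ℂ) (s t : ℝ), α (z + (s • w₁ + t • w₂)) = α z + s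
  β_add : ∀ (z : ℂ) (s t : ℝ), β (z + (s • w₁ + t • w₂)) = β z + t
  ext : ∀ z z' : ℂ, α z = α z' → β z = β z' → z = z'

lemma volume_level_eq_zero {f : ℂ → ℝ} (hf : Continuous f) (w : ℂ)
    (h : ∀ (z : ℂ) (s : ℝ), f (z + s • w) = f z + s) (t : ℝ) : volume {z | f z = t} = 0 := by
  by_contra hne
  have hc : Set.Countable {t : ℝ | 0 < volume {z : ℂ | f z = t}} :=
    Measure.countable_meas_level_set_pos hf.measurable
  have hall : {t : ℝ | 0 < volume {z : ℂ | f z = t}} = univ := by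
    refine eq_univ_of_forall fun s => ?_
    have : {z | f z = s} = (fun z => z + (t - s) • w) ⁻¹' {z | f z = t} := by
      ext z
      simp only [mem_ofPred_eq, mem_preimage, h]
      constructor <;> intro h <;> linarith
    rw [mem_ofPred_eq, this, measure_preimage_add_right]
    exact pos_iff_ne_zero.2 hne
  rw [hall] at hc
  exact not_countable_univ hc

namespace AffineCoords

variable (e : AffineCoords)

/-- The difference of the two coordinates. -/
def d (z : ℂ) : ℝ := e.α z - e.β z

/-- The coordinate triangle. -/
def T : Set ℂ := {z | 0 ≤ e.α z ∧ 0 ≤ e.β z ∧ e.α z + e.β z ≤ 1}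

/-- The union of the two legs of the coordinate triangle. -/
def legs : Set ℂ := {z | z ∈ e.T ∧ (e.α z = 0 ∨ e.β z = 0)}

lemma continuous_d : Continuous e.d := e.continuous_α.sub e.continuous_β

lemma isClosed_T : IsClosed e.T :=
  (isClosed_le continuous_const e.continuous_α).inter
    ((isClosed_le continuous_const e.continuous_β).inter
      (isClosed_le (e.continuous_α.add e.continuous_β) continuous_const))

lemma isCompact_T : IsCompact e.T := by
  set o : ℂ := 0 + ((-e.α 0) • e.w₁ + (-e.β 0) • e.w₂) with ho
  have hα : e.α o = 0 := by rw [ho, e.α_add]; ring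
  have hβ : e.β o = 0 := by rw [ho, e.β_add]; ring
  refine IsCompact.of_isClosed_subset (s := (fun p : ℝ × ℝ => o + (p.1 • e.w₁ + p.2 • e.w₂)) ''
    (Icc 0 1 ×ˢ Icc 0 1)) ?_ e.isClosed_T ?_
  · exact (isCompact_Icc.prod isCompact_Icc).image (by fun_prop)
  · rintro z ⟨h1, h2, h3⟩
    refine ⟨(e.α z, e.β z), ⟨⟨h1, by linarith⟩, ⟨h2, by linarith⟩⟩, e.ext _ _ ?_ ?_⟩
    · rw [e.α_add, hα, zero_add]
    · rw [e.β_add, hβ, zero_add]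

lemma legs_subset : e.legs ⊆ e.T := fun _ h => h.1

lemma isClosed_legs : IsClosed e.legs :=
  e.isClosed_T.inter ((isClosed_eq e.continuous_α continuous_const).union
    (isClosed_eq e.continuous_β continuous_const))

lemma volume_α_eq (t : ℝ) : volume {z | e.α z = t} = 0 :=
  volume_level_eq_zero e.continuous_α e.w₁ (fun z s => by simpa using e.α_add z s 0) t

lemma volume_β_eq (t : ℝ) : volume {z | e.β z = t} = 0 :=
  volume_level_eq_zero e.continuous_β e.w₂ (fun z s => by simpa using e.β_add z 0 s) t

lemma volume_d_eq (t : ℝ) : volume {z | e.d z = t} = 0 :=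
  volume_level_eq_zero e.continuous_d e.w₁ (fun z s => by
    have h1 := e.α_add z s 0
    have h2 := e.β_add z s 0
    simp only [zero_smul, add_zero] at h1 h2
    rw [d, h1, h2, d]; ring) t

lemma volume_legs : volume e.legs = 0 :=
  measure_mono_null (fun _ h => h.2) (measure_union_null (e.volume_α_eq 0) (e.volume_β_eq 0))

lemma d_mem_Icc {z : ℂ} (hz : z ∈ e.T) : e.d z ∈ Icc (-1 : ℝ) 1 := by
  obtain ⟨h1, h2, h3⟩ := hz
  exact ⟨by rw [d]; linarith, by rw [d]; linarith⟩

lemma eq_of_mem_legs {z z' : ℂ} (hz : z ∈ e.legs) (hz' : z' ∈ e.legs) (h : e.d z = e.d z') :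
    z = z' := by
  obtain ⟨⟨h1, h2, -⟩, h3⟩ := hz
  obtain ⟨⟨h1', h2', -⟩, h3'⟩ := hz'
  rw [d, d] at h
  refine e.ext _ _ ?_ ?_ <;> rcases h3 with h3 | h3 <;> rcases h3' with h3' | h3' <;> linarith

/-- Moving from a point of the triangle away from the legs, one either stays in the triangle
or leaves it through the third edge. -/
lemma escape {X K : Set ℂ} (hK : IsClosed K) (hXK : X ⊆ K) {b : ℂ}
    (hb : b ∈ e.T) (hα : 0 < e.α b) (hβ : 0 < e.β b) {p q τ : ℝ} (hp : 0 ≤ p) (hq : 0 ≤ q)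
    (hpq : 0 < p + q) (hτ : 0 ≤ τ)
    (h : ∀ s ∈ Icc 0 τ, b + ((s * p) • e.w₁ + (s * q) • e.w₂) ∈ e.T →
      b + ((s * p) • e.w₁ + (s * q) • e.w₂) ∉ K) :
    (∃ x ∉ X ∪ e.T, x ∈ connectedComponentIn Kᶜ b) ∨
      (b + ((τ * p) • e.w₁ + (τ * q) • e.w₂) ∈ e.T ∧
        b + ((τ * p) • e.w₁ + (τ * q) • e.w₂) ∈ connectedComponentIn Kᶜ b) := by
  set γ : ℝ → ℂ := fun s => b + ((s * p) • e.w₁ + (s * q) • e.w₂) with hγ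
  have hγc : Continuous γ := by fun_prop
  have hγ0 : γ 0 = b := by simp [hγ]
  have hγα : ∀ s, e.α (γ s) = e.α b + s * p := fun s => e.α_add _ _ _
  have hγβ : ∀ s, e.β (γ s) = e.β b + s * q := fun s => e.β_add _ _ _
  have hT : ∀ s, 0 ≤ s → (γ s ∈ e.T ↔ e.α b + e.β b + s * (p + q) ≤ 1) := by
    intro s hs
    have := mul_nonneg hs hp
    have := mul_nonneg hs hq
    simp only [T, mem_ofPred_eq, hγα, hγβ]
    constructor
    · rintro ⟨-, -, h⟩; linarith
    · intro h; refine ⟨by linarith, by linarith, by linarith⟩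
  have hcc : ∀ s, 0 ≤ s → (∀ r ∈ Icc 0 s, γ r ∉ K) → γ s ∈ connectedComponentIn Kᶜ b := by
    intro s hs hr
    have hpre : IsPreconnected (γ '' Icc 0 s) := isPreconnected_Icc.image _ hγc.continuousOn
    refine hpre.subset_connectedComponentIn ⟨0, ⟨le_rfl, hs⟩, hγ0⟩ ?_ ⟨s, ⟨hs, le_rfl⟩, rfl⟩
    rintro _ ⟨r, hr', rfl⟩
    exact hr r hr'
  by_cases hτT : γ τ ∈ e.T
  · refine Or.inr ⟨hτT, hcc τ hτ fun r hr => h r hr ?_⟩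
    rw [hT τ hτ] at hτT
    exact (hT r hr.1).2 (by nlinarith [hr.2])
  · left
    rw [hT τ hτ] at hτT
    set s₀ := (1 - e.α b - e.β b) / (p + q) with hs₀
    have hs₀e : s₀ * (p + q) = 1 - e.α b - e.β b := div_mul_cancel₀ _ hpq.ne'
    have hs₀0 : 0 ≤ s₀ := div_nonneg (by linarith [hb.2.2]) hpq.le
    have hs₀τ : s₀ ≤ τ := by
      by_contra hcon
      nlinarith
    have hin : ∀ r ∈ Icc 0 s₀, γ r ∉ K := fun r hr => h r ⟨hr.1, hr.2.trans hs₀τ⟩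
      ((hT r hr.1).2 (by nlinarith [hr.2]))
    have hev : ∀ᶠ s in 𝓝 s₀, γ s ∈ Kᶜ :=
      hγc.continuousAt.eventually (hK.isOpen_compl.mem_nhds (hin s₀ ⟨hs₀0, le_rfl⟩))
    obtain ⟨δ, hδ, hball⟩ := Metric.eventually_nhds_iff.1 hev
    have hout : ∀ r ∈ Icc 0 (s₀ + δ / 2), γ r ∉ K := by
      intro r hr
      rcases le_or_gt r s₀ with hle | hlt
      · exact hin r ⟨hr.1, hle⟩
      · refine hball ?_
        rw [Real.dist_eq, abs_of_pos (by linarith)]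
        linarith [hr.2]
    have hs1 : 0 ≤ s₀ + δ / 2 := by positivity
    refine ⟨γ (s₀ + δ / 2), ?_, hcc _ hs1 hout⟩
    rintro (hx | hx)
    · exact hout _ ⟨hs1, le_rfl⟩ (hXK hx)
    · rw [hT _ hs1] at hx
      nlinarith
end AffineCoords

/-- The `i`-th point of the uniform partition of `[-1, 1]` into `N` intervals. -/
noncomputable def node (N i : ℕ) : ℝ := -1 + 2 * i / N

/-- The points of the uniform partition of `[-1, 1]` into `N` intervals. -/
def nodes (N : ℕ) : Set ℝ := node N '' Iic N

/-- The union of the partition intervals with index in `I`. -/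
def gaps (N : ℕ) (I : Finset ℕ) : Set ℝ := ⋃ i ∈ I, Icc (node N i) (node N (i + 1))

lemma isCompact_nodes (N : ℕ) : IsCompact (nodes N) := ((finite_Iic N).image _).isCompact

lemma nodes_nonempty (N : ℕ) : (nodes N).Nonempty := ⟨_, mem_image_of_mem _ (mem_Iic.2 le_rfl)⟩

lemma isClosed_gaps (N : ℕ) (I : Finset ℕ) : IsClosed (gaps N I) :=
  I.finite_toSet.isClosed_biUnion fun _ _ => isClosed_Icc

lemma node_lt_node_iff {N : ℕ} (hN : 0 < N) {i j : ℕ} : node N i < node N j ↔ i < j := by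
  have : (0 : ℝ) < N := by exact_mod_cast hN
  rw [node, node, add_lt_add_iff_left, div_lt_div_iff_of_pos_right this,
    mul_lt_mul_iff_right₀ two_pos, Nat.cast_lt]

lemma exists_mem_Icc_node {N : ℕ} (hN : 0 < N) {x : ℝ} (hx : x ∈ Icc (-1 : ℝ) 1) :
    ∃ i < N, x ∈ Icc (node N i) (node N (i + 1)) := by
  have hN' : (0 : ℝ) < N := by exact_mod_cast hN
  set y : ℝ := (x + 1) * N / 2 with hy
  have hxy : x = -1 + 2 * y / N := by rw [hy]; field_simp; ring
  have hy0 : 0 ≤ y := by have := hx.1; have : 0 ≤ x + 1 := by linarith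
                         positivity
  have hyN : y ≤ N := by rw [hy]; nlinarith [hx.2]
  rcases eq_or_lt_of_le hyN with hyN | hyN
  · refine ⟨N - 1, by omega, ?_, ?_⟩
    · rw [hxy, node]
      gcongr
      rw [hyN]
      exact_mod_cast Nat.sub_le N 1
    · rw [hxy, node, Nat.sub_add_cancel hN, hyN]
  · refine ⟨⌊y⌋₊, (Nat.floor_lt hy0).2 hyN, ?_, ?_⟩
    · rw [hxy, node]
      gcongr
      exact Nat.floor_le hy0
    · rw [hxy, node]
      gcongr
      push_cast
      exact (Nat.lt_floor_add_one y).le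

lemma notMem_nodes_of_mem_Ioo {N : ℕ} (hN : 0 < N) {i : ℕ} {x : ℝ}
    (hx : x ∈ Ioo (node N i) (node N (i + 1))) : x ∉ nodes N := by
  rintro ⟨j, -, rfl⟩
  have h1 := (node_lt_node_iff hN).1 hx.1
  have h2 := (node_lt_node_iff hN).1 hx.2
  omega

lemma mem_gaps_iff_of_mem_Ioo {N : ℕ} (hN : 0 < N) {I : Finset ℕ} {i : ℕ} {x : ℝ}
    (hx : x ∈ Ioo (node N i) (node N (i + 1))) : x ∈ gaps N I ↔ i ∈ I := by
  simp only [gaps, mem_iUnion, exists_prop]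
  constructor
  · rintro ⟨j, hj, h1, h2⟩
    have h3 := (node_lt_node_iff hN).1 (hx.1.trans_le h2)
    have h4 := (node_lt_node_iff hN).1 (h1.trans_lt hx.2)
    rwa [show i = j by omega]
  · exact fun hi => ⟨i, hi, hx.1.le, hx.2.le⟩

lemma exists_mem_Ioo_node {N : ℕ} (hN : 0 < N) {x : ℝ} (hx : x ∈ Icc (-1 : ℝ) 1)
    (h : x ∉ nodes N) : ∃ i < N, x ∈ Ioo (node N i) (node N (i + 1)) := by
  obtain ⟨i, hi, h1, h2⟩ := exists_mem_Icc_node hN hx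
  refine ⟨i, hi, lt_of_le_of_ne h1 ?_, lt_of_le_of_ne h2 ?_⟩
  · rintro rfl
    exact h ⟨i, mem_Iic.2 hi.le, rfl⟩
  · rintro rfl
    exact h ⟨i + 1, mem_Iic.2 hi, rfl⟩

namespace AffineCoords

variable (e : AffineCoords)

/-- The strips of the triangle with index in `I`. -/
def strips (N : ℕ) (I : Finset ℕ) : Set ℂ := e.T ∩ e.d ⁻¹' gaps N I

/-- The segments separating the strips of the triangle. -/
def ribs (N : ℕ) : Set ℂ := e.T ∩ e.d ⁻¹' nodes N

/-- The part of the strips at depth at least `η` from the legs and the ribs. -/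
def core (N : ℕ) (I : Finset ℕ) (η : ℝ) : Set ℂ :=
  e.strips N I ∩ {z | η ≤ e.α z ∧ η ≤ e.β z ∧ η ≤ Metric.infDist (e.d z) (nodes N)}

lemma isClosed_strips (N : ℕ) (I : Finset ℕ) : IsClosed (e.strips N I) :=
  e.isClosed_T.inter ((isClosed_gaps N I).preimage e.continuous_d)

lemma isClosed_ribs (N : ℕ) : IsClosed (e.ribs N) :=
  e.isClosed_T.inter ((isCompact_nodes N).isClosed.preimage e.continuous_d)

lemma isClosed_core (N : ℕ) (I : Finset ℕ) (η : ℝ) : IsClosed (e.core N I η) :=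
  (e.isClosed_strips N I).inter ((isClosed_le continuous_const e.continuous_α).inter
    ((isClosed_le continuous_const e.continuous_β).inter (isClosed_le continuous_const
      ((Metric.continuous_infDist_pt _).comp e.continuous_d))))

lemma volume_ribs (N : ℕ) : volume (e.ribs N) = 0 := by
  have : e.ribs N ⊆ ⋃ i ∈ Iic N, {z | e.d z = node N i} := by
    rintro z ⟨-, i, hi, h⟩
    exact mem_biUnion hi h.symm
  exact measure_mono_null this
    ((measure_biUnion_null_iff (finite_Iic N).countable).2 fun i _ => e.volume_d_eq _)

/-- The legs and the ribs of the triangle. -/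
def skeleton (N : ℕ) : Set ℂ := e.legs ∪ e.ribs N

lemma isClosed_skeleton (N : ℕ) : IsClosed (e.skeleton N) :=
  e.isClosed_legs.union (e.isClosed_ribs N)

lemma skeleton_subset (N : ℕ) : e.skeleton N ⊆ e.T :=
  union_subset e.legs_subset inter_subset_left

lemma volume_skeleton (N : ℕ) : volume (e.skeleton N) = 0 :=
  measure_union_null e.volume_legs (e.volume_ribs N)

lemma escape_vertical {X K : Set ℂ} (hK : IsClosed K) (hXK : X ⊆ K) {b : ℂ}
    (hb : b ∈ e.T) (hα : 0 < e.α b) (hβ : 0 < e.β b)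
    (h : ∀ z ∈ e.T, e.d z = e.d b → 0 < e.α z → 0 < e.β z → z ∉ K) :
    ∃ x ∉ X ∪ e.T, x ∈ connectedComponentIn Kᶜ b := by
  refine (e.escape hK hXK hb hα hβ zero_le_one zero_le_one (by norm_num) zero_le_one
    fun s hs hT => h _ hT ?_ ?_ ?_).resolve_right fun ⟨hT, _⟩ => ?_
  · rw [d, e.α_add, e.β_add, d]; ring
  · rw [e.α_add]; linarith [hs.1]
  · rw [e.β_add]; linarith [hs.1]
  · have := hT.2.2
    rw [e.α_add, e.β_add] at this
    linarith

variable {e}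

lemma pos_of_notMem_legs {z : ℂ} (hz : z ∈ e.T) (h : z ∉ e.legs) : 0 < e.α z ∧ 0 < e.β z := by
  refine ⟨lt_of_le_of_ne hz.1 fun h0 => h ⟨hz, Or.inl h0.symm⟩,
    lt_of_le_of_ne hz.2.1 fun h0 => h ⟨hz, Or.inr h0.symm⟩⟩

lemma notMem_legs_of_pos {z : ℂ} (hα : 0 < e.α z) (hβ : 0 < e.β z) : z ∉ e.legs :=
  fun h => h.2.elim hα.ne' hβ.ne'

lemma holeFree_skeleton {U X : Set ℂ} (hX : IsClosed X) (hXT : X ∩ e.T ⊆ e.legs)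
    (hHF : HoleFree U (X ∪ e.T)) (N : ℕ) : HoleFree U (X ∪ e.skeleton N) := by
  refine hHF.of_subset (union_subset_union_right X (e.skeleton_subset N)) fun b hb hbK => ?_
  have hbT : b ∈ e.T := hb.resolve_left fun h => hbK (Or.inl h)
  have hbl : b ∉ e.legs := fun h => hbK (Or.inr (Or.inl h))
  obtain ⟨hα, hβ⟩ := pos_of_notMem_legs hbT hbl
  refine e.escape_vertical (hX.union (e.isClosed_skeleton N)) subset_union_left hbT hα hβ ?_
  rintro z hz hd h1 h2 (hzX | hzl | hzr)
  · exact notMem_legs_of_pos h1 h2 (hXT ⟨hzX, hz⟩)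
  · exact notMem_legs_of_pos h1 h2 hzl
  · refine hbK (Or.inr (Or.inr ⟨hbT, ?_⟩))
    rw [mem_preimage, ← hd]
    exact hzr.2

lemma holeFree_core {U X : Set ℂ} (hX : IsClosed X) (hXT : X ∩ e.T ⊆ e.legs)
    (hHF : HoleFree U (X ∪ e.T)) {N : ℕ} (hN : 0 < N) (I J : Finset ℕ) {η : ℝ} (hη : 0 < η)
    (hIJ : ∀ i < N, i ∈ I ∨ i ∈ J) :
    HoleFree U (X ∪ e.skeleton N ∪ e.strips N J ∪ e.core N I η) := by
  set K := X ∪ e.skeleton N ∪ e.strips N J ∪ e.core N I η with hK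
  have hKc : IsClosed K := ((hX.union (e.isClosed_skeleton N)).union (e.isClosed_strips N J)).union
    (e.isClosed_core N I η)
  have hXK : X ⊆ K := fun z hz => Or.inl (Or.inl (Or.inl hz))
  have hKT : K ⊆ X ∪ e.T := by
    rintro z (((h | h) | h) | h)
    · exact Or.inl h
    · exact Or.inr (e.skeleton_subset N h)
    · exact Or.inr h.1
    · exact Or.inr h.1.1
  refine hHF.of_subset hKT fun b hb hbK => ?_
  have hbT : b ∈ e.T := hb.resolve_left fun h => hbK (hXK h)
  have hbl : b ∉ e.legs := fun h => hbK (Or.inl (Or.inl (Or.inr (Or.inl h))))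
  have hbn : e.d b ∉ nodes N := fun h => hbK (Or.inl (Or.inl (Or.inr (Or.inr ⟨hbT, h⟩))))
  have hbJ : e.d b ∉ gaps N J := fun h => hbK (Or.inl (Or.inr ⟨hbT, h⟩))
  obtain ⟨hα, hβ⟩ := pos_of_notMem_legs hbT hbl
  obtain ⟨i, hi, hdi⟩ := exists_mem_Ioo_node hN (e.d_mem_Icc hbT) hbn
  have hiJ : i ∉ J := fun h => hbJ ((mem_gaps_iff_of_mem_Ioo hN hdi).2 h)
  have hiI : i ∈ I := (hIJ i hi).resolve_right hiJ
  have hout : ∀ z ∈ e.T, e.d z ∈ Ioo (node N i) (node N (i + 1)) → 0 < e.α z → 0 < e.β z →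
      (e.α z < η ∨ e.β z < η ∨ Metric.infDist (e.d z) (nodes N) < η) → z ∉ K := by
    rintro z hz hd h1 h2 h3 (((h | h | h) | h) | h)
    · exact notMem_legs_of_pos h1 h2 (hXT ⟨h, hz⟩)
    · exact notMem_legs_of_pos h1 h2 h
    · exact notMem_nodes_of_mem_Ioo hN hd h.2
    · exact hiJ ((mem_gaps_iff_of_mem_Ioo hN hd).1 h.2)
    · obtain ⟨-, h4, h5, h6⟩ := h
      rcases h3 with h3 | h3 | h3 <;> linarith
  have hvert : ∀ c ∈ e.T, e.d c ∈ Ioo (node N i) (node N (i + 1)) → 0 < e.α c → 0 < e.β c →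
      Metric.infDist (e.d c) (nodes N) < η → c ∈ connectedComponentIn Kᶜ b →
      ∃ x ∉ X ∪ e.T, x ∈ connectedComponentIn Kᶜ b := by
    intro c hc hd h1 h2 h3 h4
    rw [connectedComponentIn_eq h4]
    refine e.escape_vertical hKc hXK hc h1 h2 fun z hz hdz h5 h6 =>
      hout z hz (hdz ▸ hd) h5 h6 (Or.inr (Or.inr (hdz ▸ h3)))
  have hcol : e.α b < η ∨ e.β b < η ∨ Metric.infDist (e.d b) (nodes N) < η := by
    by_contra! hcon
    exact hbK (Or.inr ⟨⟨hbT, (mem_gaps_iff_of_mem_Ioo hN hdi).2 hiI⟩, hcon⟩)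
  have hslide : ∀ p q : ℝ, 0 ≤ p → 0 ≤ q → 0 < p + q →
      (∀ s ≥ 0, e.α b + s * p < η ∨ e.β b + s * q < η) →
      (∃ τ ≥ 0, (∀ s ∈ Icc 0 τ, e.d b + s * (p - q) ∈ Ioo (node N i) (node N (i + 1))) ∧
        Metric.infDist (e.d b + τ * (p - q)) (nodes N) < η) →
      ∃ x ∉ X ∪ e.T, x ∈ connectedComponentIn Kᶜ b := by
    rintro p q hp hq hpq hs ⟨τ, hτ, hd, hτd⟩
    have hdd : ∀ s : ℝ, e.d (b + ((s * p) • e.w₁ + (s * q) • e.w₂)) = e.d b + s * (p - q) := by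
      intro s
      rw [d, e.α_add, e.β_add, d]
      ring
    have hpos : ∀ s ≥ 0, 0 < e.α (b + ((s * p) • e.w₁ + (s * q) • e.w₂)) ∧
        0 < e.β (b + ((s * p) • e.w₁ + (s * q) • e.w₂)) := by
      intro s hs
      rw [e.α_add, e.β_add]
      exact ⟨by positivity, by positivity⟩
    have hray : ∀ s ∈ Icc 0 τ, b + ((s * p) • e.w₁ + (s * q) • e.w₂) ∈ e.T →
        b + ((s * p) • e.w₁ + (s * q) • e.w₂) ∉ K := by
      intro s hs' hT
      refine hout _ hT ?_ (hpos s hs'.1).1 (hpos s hs'.1).2 ?_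
      · rw [hdd]; exact hd s hs'
      · rw [e.α_add, e.β_add]
        exact (hs s hs'.1).imp_right Or.inl
    rcases e.escape hKc hXK hbT hα hβ hp hq hpq hτ hray with h | ⟨h1, h2⟩
    · exact h
    · refine hvert _ h1 ?_ (hpos τ hτ).1 (hpos τ hτ).2 ?_ h2
      · rw [hdd]; exact hd τ ⟨hτ, le_rfl⟩
      · rw [hdd]; exact hτd
  rcases hcol with hc | hc | hc
  · set ρ := min η (e.d b - node N i) / 2 with hρ
    have hm : 0 < min η (e.d b - node N i) := lt_min hη (sub_pos.2 hdi.1)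
    have hm1 := min_le_left η (e.d b - node N i)
    have hm2 := min_le_right η (e.d b - node N i)
    refine hslide 0 1 le_rfl zero_le_one (by norm_num) (fun s _ => Or.inl (by linarith))
      ⟨e.d b - node N i - ρ, by linarith, fun s hs => ⟨by linarith [hs.2], ?_⟩, ?_⟩
    · linarith [hs.1, hdi.2]
    · refine (Metric.infDist_le_dist_of_mem (mem_image_of_mem _ (mem_Iic.2 hi.le))).trans_lt ?_
      rw [Real.dist_eq, abs_of_pos] <;> linarith
  · set ρ := min η (node N (i + 1) - e.d b) / 2 with hρ
    have hm : 0 < min η (node N (i + 1) - e.d b) := lt_min hη (sub_pos.2 hdi.2)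
    have hm1 := min_le_left η (node N (i + 1) - e.d b)
    have hm2 := min_le_right η (node N (i + 1) - e.d b)
    refine hslide 1 0 zero_le_one le_rfl (by norm_num) (fun s _ => Or.inr (by linarith))
      ⟨node N (i + 1) - e.d b - ρ, by linarith, fun s hs => ⟨?_, by linarith [hs.2]⟩, ?_⟩
    · linarith [hs.1, hdi.1]
    · refine (Metric.infDist_le_dist_of_mem (mem_image_of_mem (node N)
        (mem_Iic.2 (Nat.succ_le_of_lt hi)))).trans_lt ?_
      rw [Real.dist_eq, abs_of_neg] <;> linarith
  · exact hvert b hbT hdi hα hβ hc (mem_connectedComponentIn hbK)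

end AffineCoords

namespace AffineCoords

variable {e : AffineCoords}

lemma isCompact_strips (N : ℕ) (I : Finset ℕ) : IsCompact (e.strips N I) :=
  e.isCompact_T.of_isClosed_subset (e.isClosed_strips N I) inter_subset_left

lemma exists_partition {U X : Set ℂ} (hX : IsCompact X) (hXU : X ⊆ U)
    (hXT : X ∩ e.T ⊆ e.legs) {l : ℂ → ℝ} (hl : ContinuousOn l U) {F G : ℂ → ℂ}
    (hF : DifferentiableOn ℂ F U) (hG : DifferentiableOn ℂ G U) (h : Dominates l F G X) :
    ∃ N > 0, ∃ I ⊆ Finset.range N, (∀ z ∈ X ∩ e.strips N I, l z < (F z).re) ∧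
      ∀ z ∈ X ∩ e.strips N (Finset.range N \ I), l z < (G z).re := by
  classical
  have hXT' : IsCompact (X ∩ e.T) := hX.inter_right e.isClosed_T
  have hsub : X ∩ e.T ⊆ U := inter_subset_left.trans hXU
  have hcomp : ∀ H : ℂ → ℂ, DifferentiableOn ℂ H U →
      IsCompact (e.d '' {z ∈ X ∩ e.T | (H z).re ≤ l z}) := fun H hH =>
    (hXT'.of_isClosed_subset (hXT'.isClosed.isClosed_le (continuousOn_re hsub hH) (hl.mono hsub))
      (sep_subset _ _)).image e.continuous_d
  have hdisj : Disjoint (e.d '' {z ∈ X ∩ e.T | (F z).re ≤ l z})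
      (e.d '' {z ∈ X ∩ e.T | (G z).re ≤ l z}) := by
    rw [disjoint_left]
    rintro _ ⟨z, ⟨hz, hzF⟩, rfl⟩ ⟨z', ⟨hz', hzG⟩, hd⟩
    obtain rfl := e.eq_of_mem_legs (hXT hz') (hXT hz) hd
    exact (h z' hz.1).elim hzF.not_gt hzG.not_gt
  obtain ⟨δ, hδ, hthick⟩ := hdisj.exists_thickenings (hcomp F hF) (hcomp G hG).isClosed
  obtain ⟨N, hN⟩ := exists_nat_gt (2 / δ)
  have hN0 : (0 : ℝ) < N := lt_trans (by positivity) hN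
  have hNδ : 2 / (N : ℝ) < δ := by
    rw [div_lt_iff₀ hδ] at hN
    rw [div_lt_iff₀ hN0]
    linarith
  refine ⟨N, by exact_mod_cast hN0, {i ∈ Finset.range N | ∀ z ∈ X ∩ e.T,
    e.d z ∈ Icc (node N i) (node N (i + 1)) → l z < (F z).re}, Finset.filter_subset _ _, ?_, ?_⟩
  · rintro z ⟨hzX, hzT, hz⟩
    simp only [mem_preimage, gaps, mem_iUnion, Finset.mem_filter, exists_prop] at hz
    obtain ⟨i, ⟨-, hi⟩, hzi⟩ := hz
    exact hi z ⟨hzX, hzT⟩ hzi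
  · rintro z ⟨hzX, hzT, hz⟩
    simp only [mem_preimage, gaps, mem_iUnion, Finset.mem_filter, exists_prop, Finset.mem_sdiff,
      not_and] at hz
    obtain ⟨i, ⟨hiN, hi⟩, hzi⟩ := hz
    have hi := hi hiN
    push Not at hi
    obtain ⟨z', hz', hzi', hlz'⟩ := hi
    by_contra! hcon
    have hdist : dist (e.d z) (e.d z') < δ := by
      have hnode : node N (i + 1) - node N i = 2 / N := by
        simp only [node]
        push_cast
        ring
      exact (Real.dist_le_of_mem_Icc hzi hzi').trans_lt (hnode ▸ hNδ)
    exact disjoint_left.1 hthick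
      (Metric.mem_thickening_iff.2 ⟨_, mem_image_of_mem _ ⟨hz', hlz'⟩, hdist⟩)
      (Metric.self_subset_thickening hδ _ (mem_image_of_mem _ ⟨⟨hzX, hzT⟩, hcon⟩))

lemma exists_gt_on_frame {U X : Set ℂ} (hX : IsCompact X) (hXU : X ∪ e.T ⊆ U)
    (hXT : X ∩ e.T ⊆ e.legs) (hHF : HoleFree U (X ∪ e.T)) {l : ℂ → ℝ} (hl : ContinuousOn l U)
    {F : ℂ → ℂ} (hF : DifferentiableOn ℂ F U) (N : ℕ) (I : Finset ℕ)
    (h : ∀ z ∈ X ∩ e.strips N I, l z < (F z).re) {ε : ℝ} (hε : 0 < ε) :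
    ∃ F' : ℂ → ℂ, DifferentiableOn ℂ F' U ∧ (∀ z ∈ X, ‖F' z - F z‖ < ε) ∧
      ∀ z ∈ e.strips N I ∩ e.skeleton N, l z < (F' z).re := by
  have hS : IsCompact (e.strips N I ∩ e.skeleton N) :=
    (isCompact_strips N I).inter_right (e.isClosed_skeleton N)
  have hSU : e.strips N I ∩ e.skeleton N ⊆ U := fun z hz => hXU (Or.inr hz.1.1)
  have hXS : X ∩ e.strips N I ⊆ U := fun z hz => hXU (Or.inl hz.1)
  obtain ⟨s, hs, hsX⟩ := exists_pos_le_of_isCompact (hX.inter_right (e.isClosed_strips N I))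
    ((continuousOn_re hXS hF).sub (hl.mono hXS)) fun z hz => sub_pos.2 (h z hz)
  simp only [Pi.sub_apply] at hsX
  set R := {z ∈ e.strips N I ∩ e.skeleton N | (F z).re ≤ l z + s / 2} with hR
  have hRc : IsCompact R := hS.of_isClosed_subset (hS.isClosed.isClosed_le (continuousOn_re hSU hF)
    ((hl.mono hSU).add continuousOn_const)) (sep_subset _ _)
  have hskel : IsCompact (e.skeleton N) :=
    e.isCompact_T.of_isClosed_subset (e.isClosed_skeleton N) (e.skeleton_subset N)
  obtain ⟨F', hF', hFX, hFK, hFR⟩ := exists_correction (hX.union hskel)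
    ((union_subset_union_right X (e.skeleton_subset N)).trans hXU)
    (holeFree_skeleton hX.isClosed hXT hHF N) hX hRc subset_union_left
    (fun z hz => Or.inr hz.1.2)
    (by
      rw [disjoint_left]
      rintro z hzX ⟨⟨hz, -⟩, hzl⟩
      linarith [hsX z ⟨hzX, hz⟩])
    (measure_mono_null (fun z hz => hz.1.resolve_left fun h => hz.2 (Or.inl h))
      (e.volume_skeleton N)) hl hF (lt_min hε (half_pos hs))
  refine ⟨F', hF', fun z hz => (hFX z hz).trans_le (min_le_left _ _), fun z hz => ?_⟩
  by_cases hzR : z ∈ R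
  · exact hFR z hzR
  · have h1 : l z + s / 2 < (F z).re := by
      by_contra! hcon
      exact hzR ⟨hz, hcon⟩
    linarith [hFK z (Or.inr hz.2), min_le_right ε (s / 2)]

lemma exists_core_depth {U : Set ℂ} (hTU : e.T ⊆ U) {l : ℂ → ℝ} (hl : ContinuousOn l U)
    {F : ℂ → ℂ} (hF : DifferentiableOn ℂ F U) (N : ℕ) (I : Finset ℕ)
    (h : ∀ z ∈ e.strips N I ∩ e.skeleton N, l z < (F z).re) :
    ∃ η > 0, ∃ ε > 0, ∀ F' : ℂ → ℂ, (∀ z ∈ e.strips N I, ‖F' z - F z‖ < ε) →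
      ∀ z ∈ e.strips N I, z ∉ e.core N I η → l z < (F' z).re := by
  have hSU : e.strips N I ⊆ U := fun z hz => hTU hz.1
  have hSc := isCompact_strips (e := e) N I
  set ρ : ℂ → ℝ := fun z => min (e.α z) (min (e.β z) (Metric.infDist (e.d z) (nodes N))) with hρ
  have hρc : Continuous ρ := e.continuous_α.min (e.continuous_β.min
    ((Metric.continuous_infDist_pt _).comp e.continuous_d))
  have hA : IsCompact {z ∈ e.strips N I | (F z).re ≤ l z} := hSc.of_isClosed_subset
    (hSc.isClosed.isClosed_le (continuousOn_re hSU hF) (hl.mono hSU)) (sep_subset _ _)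
  obtain ⟨η, hη, hηA⟩ := exists_pos_le_of_isCompact hA hρc.continuousOn (by
    rintro z ⟨hz, hzl⟩
    have hns : z ∉ e.skeleton N := fun hs => (h z ⟨hz, hs⟩).not_ge hzl
    obtain ⟨h1, h2⟩ := pos_of_notMem_legs hz.1 fun hh => hns (Or.inl hh)
    refine lt_min h1 (lt_min h2 ?_)
    rw [← (isCompact_nodes N).isClosed.notMem_iff_infDist_pos (nodes_nonempty N)]
    exact fun hh => hns (Or.inr ⟨hz.1, hh⟩))
  have hC : IsCompact (e.strips N I ∩ {z | ρ z ≤ η / 2}) :=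
    hSc.inter_right (isClosed_le hρc continuous_const)
  obtain ⟨ε, hε, hstab⟩ := exists_pos_forall_re_gt hC (inter_subset_left.trans hSU) hl hF (by
    rintro z ⟨hz, hzρ⟩
    by_contra! hcon
    have := hηA z ⟨hz, hcon⟩
    rw [mem_ofPred_eq] at hzρ
    linarith)
  refine ⟨η / 2, half_pos hη, ε, hε, fun F' hF' z hz hzc => hstab F' z ⟨hz, ?_⟩ (hF' z hz)⟩
  by_contra hcon
  rw [mem_ofPred_eq, not_le, lt_min_iff, lt_min_iff] at hcon
  exact hzc ⟨hz, hcon.1.le, hcon.2.1.le, hcon.2.2.le⟩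

lemma exists_gt_on_core {U X : Set ℂ} (hX : IsCompact X) (hXU : X ∪ e.T ⊆ U)
    (hXT : X ∩ e.T ⊆ e.legs) (hHF : HoleFree U (X ∪ e.T)) {l : ℂ → ℝ} (hl : ContinuousOn l U)
    {G : ℂ → ℂ} (hG : DifferentiableOn ℂ G U) {N : ℕ} (hN : 0 < N) (I J : Finset ℕ)
    (hIJ : ∀ i < N, i ∈ I ∨ i ∈ J) (hd : Disjoint I J) {η : ℝ} (hη : 0 < η) {ε : ℝ}
    (hε : 0 < ε) :
    ∃ G' : ℂ → ℂ, DifferentiableOn ℂ G' U ∧ (∀ z ∈ X, ‖G' z - G z‖ < ε) ∧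
      (∀ z ∈ e.strips N J, ‖G' z - G z‖ < ε) ∧ ∀ z ∈ e.core N I η, l z < (G' z).re := by
  have hskel : IsCompact (e.skeleton N) :=
    e.isCompact_T.of_isClosed_subset (e.isClosed_skeleton N) (e.skeleton_subset N)
  have hcore : IsCompact (e.core N I η) :=
    (isCompact_strips N I).of_isClosed_subset (e.isClosed_core N I η) inter_subset_left
  have hX' : IsCompact (X ∪ e.skeleton N ∪ e.strips N J) :=
    (hX.union hskel).union (isCompact_strips N J)
  have hKT : X ∪ e.skeleton N ∪ e.strips N J ∪ e.core N I η ⊆ X ∪ e.T := by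
    rintro z (((h | h) | h) | h)
    · exact Or.inl h
    · exact Or.inr (e.skeleton_subset N h)
    · exact Or.inr h.1
    · exact Or.inr h.1.1
  have hdisj : Disjoint (X ∪ e.skeleton N ∪ e.strips N J) (e.core N I η) := by
    rw [disjoint_left]
    rintro z hz ⟨⟨hzT, hzI⟩, h1, h2, h3⟩
    have hl := notMem_legs_of_pos (hη.trans_le h1) (hη.trans_le h2)
    have hn : e.d z ∉ nodes N := fun hh => by
      rw [Metric.infDist_zero_of_mem hh] at h3
      linarith
    rcases hz with (hz | hz | hz) | hz
    · exact hl (hXT ⟨hz, hzT⟩)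
    · exact hl hz
    · exact hn hz.2
    · obtain ⟨i, -, hi⟩ := exists_mem_Ioo_node hN (e.d_mem_Icc hzT) hn
      exact Finset.disjoint_left.1 hd ((mem_gaps_iff_of_mem_Ioo hN hi).1 hzI)
        ((mem_gaps_iff_of_mem_Ioo hN hi).1 hz.2)
  obtain ⟨G', hG', h1, -, h2⟩ := exists_correction (hX'.union hcore) (hKT.trans hXU)
    (holeFree_core hX.isClosed hXT hHF hN I J hη hIJ) hX' hcore subset_union_left
    subset_union_right hdisj (by simp) hl hG hε
  exact ⟨G', hG', fun z hz => h1 z (Or.inl (Or.inl hz)), fun z hz => h1 z (Or.inr hz), h2⟩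

/-- Domination extends from `X` to `X ∪ T` when `T` is a triangle meeting `X` only along two of
its edges. -/
lemma exists_dominates_union_triangle (e : AffineCoords) {U X : Set ℂ} (hX : IsCompact X)
    (hXU : X ∪ e.T ⊆ U)
    (hXT : X ∩ e.T ⊆ e.legs) (hHF : HoleFree U (X ∪ e.T)) {l : ℂ → ℝ} (hl : ContinuousOn l U)
    {F G : ℂ → ℂ} (hF : DifferentiableOn ℂ F U) (hG : DifferentiableOn ℂ G U)
    (h : Dominates l F G X) {ε : ℝ} (hε : 0 < ε) :
    ∃ F' G' : ℂ → ℂ, DifferentiableOn ℂ F' U ∧ DifferentiableOn ℂ G' U ∧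
      (∀ z ∈ X, ‖F' z - F z‖ < ε) ∧ (∀ z ∈ X, ‖G' z - G z‖ < ε) ∧
      Dominates l F' G' (X ∪ e.T) := by
  have hXU' : X ⊆ U := subset_union_left.trans hXU
  have hTU : e.T ⊆ U := subset_union_right.trans hXU
  obtain ⟨N, hN, I, hIN, hI, hJ⟩ := exists_partition hX hXU' hXT hl hF hG h
  set J := Finset.range N \ I with hJdef
  have hIJ : ∀ i < N, i ∈ I ∨ i ∈ J := fun i hi => by
    by_cases hiI : i ∈ I
    · exact Or.inl hiI
    · exact Or.inr (Finset.mem_sdiff.2 ⟨Finset.mem_range.2 hi, hiI⟩)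
  have hd : Disjoint I J := Finset.disjoint_sdiff
  obtain ⟨ε₁, hε₁, hstab₁⟩ := h.exists_pos hX hXU' hl hF hG
  have hm₁ : 0 < min ε₁ (ε / 2) := lt_min hε₁ (half_pos hε)
  obtain ⟨F₁, hF₁, hF₁X, hF₁S⟩ := exists_gt_on_frame hX hXU hXT hHF hl hF N I hI hm₁
  obtain ⟨G₁, hG₁, hG₁X, hG₁S⟩ := exists_gt_on_frame hX hXU hXT hHF hl hG N J hJ hm₁
  obtain ⟨ε₂, hε₂, hstab₂⟩ := (hstab₁ F₁ G₁ (fun z hz => (hF₁X z hz).trans_le (min_le_left _ _))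
    (fun z hz => (hG₁X z hz).trans_le (min_le_left _ _))).exists_pos hX hXU' hl hF₁ hG₁
  obtain ⟨η, hη, ε₃, hε₃, hF₁c⟩ := exists_core_depth hTU hl hF₁ N I hF₁S
  obtain ⟨η', hη', ε₄, hε₄, hG₁c⟩ := exists_core_depth hTU hl hG₁ N J hG₁S
  set m := min (min ε₂ (ε / 2)) (min ε₃ ε₄) with hm
  have hm0 : 0 < m := lt_min (lt_min hε₂ (half_pos hε)) (lt_min hε₃ hε₄)
  have hmε₂ : m ≤ ε₂ := (min_le_left _ _).trans (min_le_left _ _)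
  have hmε : m ≤ ε / 2 := (min_le_left _ _).trans (min_le_right _ _)
  have hmε₃ : m ≤ ε₃ := (min_le_right _ _).trans (min_le_left _ _)
  have hmε₄ : m ≤ ε₄ := (min_le_right _ _).trans (min_le_right _ _)
  obtain ⟨G₂, hG₂, hG₂X, hG₂J, hG₂I⟩ := exists_gt_on_core hX hXU hXT hHF hl hG₁ hN I J hIJ hd
    hη hm0
  obtain ⟨F₂, hF₂, hF₂X, hF₂I, hF₂J⟩ := exists_gt_on_core hX hXU hXT hHF hl hF₁ hN J I
    (fun i hi => (hIJ i hi).symm) hd.symm hη' hm0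
  have hclose : ∀ H H₁ H₂ : ℂ → ℂ, ∀ z, ‖H₁ z - H z‖ < min ε₁ (ε / 2) → ‖H₂ z - H₁ z‖ < m →
      ‖H₂ z - H z‖ < ε := by
    intro H H₁ H₂ z h1 h2
    have := norm_add_le (H₂ z - H₁ z) (H₁ z - H z)
    rw [sub_add_sub_cancel] at this
    linarith [min_le_right ε₁ (ε / 2)]
  refine ⟨F₂, G₂, hF₂, hG₂, fun z hz => hclose F F₁ F₂ z (hF₁X z hz) (hF₂X z hz),
    fun z hz => hclose G G₁ G₂ z (hG₁X z hz) (hG₂X z hz), ?_⟩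
  rintro z (hz | hz)
  · exact hstab₂ F₂ G₂ (fun z hz => (hF₂X z hz).trans_le hmε₂)
      (fun z hz => (hG₂X z hz).trans_le hmε₂) z hz
  · obtain ⟨i, hi, hzi⟩ := exists_mem_Icc_node hN (e.d_mem_Icc hz)
    rcases hIJ i hi with hiI | hiJ
    · have hzI : z ∈ e.strips N I := ⟨hz, mem_biUnion hiI hzi⟩
      by_cases hc : z ∈ e.core N I η
      · exact Or.inr (hG₂I z hc)
      · exact Or.inl (hF₁c F₂ (fun z hz => (hF₂I z hz).trans_le hmε₃) z hzI hc)
    · have hzJ : z ∈ e.strips N J := ⟨hz, mem_biUnion hiJ hzi⟩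
      by_cases hc : z ∈ e.core N J η'
      · exact Or.inl (hF₂J z hc)
      · exact Or.inr (hG₁c G₂ (fun z hz => (hG₂J z hz).trans_le hmε₄) z hzJ hc)

end AffineCoords

namespace AffineCoords

variable (e : AffineCoords)

/-- The coordinate parallelogram. -/
def Q : Set ℂ := {z | 0 ≤ e.α z ∧ e.α z ≤ 1 ∧ 0 ≤ e.β z ∧ e.β z ≤ 1}

/-- Coordinates whose triangle is the half of `e.Q` above its diagonal. -/
def upperHalf : AffineCoords where
  α := e.α
  β z := 1 - e.β z
  w₁ := e.w₁
  w₂ := -e.w₂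
  continuous_α := e.continuous_α
  continuous_β := continuous_const.sub e.continuous_β
  α_add z s t := by rw [smul_neg, ← neg_smul, e.α_add]
  β_add z s t := by rw [smul_neg, ← neg_smul, e.β_add]; ring
  ext z z' h h' := e.ext z z' h (by linarith)

/-- Coordinates whose triangle is the half of `e.Q` below its diagonal. -/
def lowerHalf : AffineCoords where
  α z := e.α z - e.β z
  β z := 1 - e.α z
  w₁ := -e.w₂
  w₂ := -e.w₁ - e.w₂
  continuous_α := e.continuous_α.sub e.continuous_β
  continuous_β := continuous_const.sub e.continuous_α
  α_add z s t := by
    rw [show s • -e.w₂ + t • (-e.w₁ - e.w₂) = (-t) • e.w₁ + (-s - t) • e.w₂ by module,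
      e.α_add, e.β_add]
    ring
  β_add z s t := by
    rw [show s • -e.w₂ + t • (-e.w₁ - e.w₂) = (-t) • e.w₁ + (-s - t) • e.w₂ by module, e.α_add]
    ring
  ext z z' h h' := e.ext z z' (by linarith) (by linarith)

lemma upperHalf_union_lowerHalf : e.upperHalf.T ∪ e.lowerHalf.T = e.Q := by
  ext z
  simp only [T, Q, upperHalf, lowerHalf, mem_union, mem_ofPred_eq]
  constructor
  · rintro (⟨h1, h2, h3⟩ | ⟨h1, h2, h3⟩) <;> refine ⟨?_, ?_, ?_, ?_⟩ <;> linarith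
  · rintro ⟨h1, h2, h3, h4⟩
    rcases le_total (e.α z) (e.β z) with h | h
    · left; refine ⟨?_, ?_, ?_⟩ <;> linarith
    · right; refine ⟨?_, ?_, ?_⟩ <;> linarith

variable {e}

lemma holeFree_union_upperHalf {U X : Set ℂ} (hX : IsClosed X)
    (hXQ : X ∩ e.Q ⊆ {z | e.α z = 0 ∨ e.α z = 1 ∨ e.β z = 1}) (hHF : HoleFree U (X ∪ e.Q)) :
    HoleFree U (X ∪ e.upperHalf.T) := by
  have hQ := e.upperHalf_union_lowerHalf
  have hK : IsClosed (X ∪ e.upperHalf.T) := hX.union e.upperHalf.isClosed_T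
  refine hHF.of_subset (union_subset_union_right X (hQ ▸ subset_union_left)) fun b hb hbK => ?_
  have hin : ∀ z ∈ e.lowerHalf.T, 0 < e.lowerHalf.α z → 0 < e.lowerHalf.β z →
      z ∉ X ∪ e.upperHalf.T := by
    rintro z hz hα hβ (h | h)
    · have := hXQ ⟨h, hQ ▸ Or.inr hz⟩
      simp only [T, lowerHalf, mem_ofPred_eq] at this hz hα hβ
      rcases this with h | h | h <;> linarith
    · simp only [T, lowerHalf, upperHalf, mem_ofPred_eq] at h hz hα hβ
      linarith [h.2.2]
  have hmain : ∀ z ∈ e.lowerHalf.T, 0 < e.lowerHalf.α z → 0 < e.lowerHalf.β z →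
      ∃ x ∉ X ∪ e.Q, x ∈ connectedComponentIn (X ∪ e.upperHalf.T)ᶜ z := by
    intro z hz hα hβ
    rcases e.lowerHalf.escape hK subset_rfl hz hα hβ (p := 1) (q := 0) (τ := 1) (by norm_num)
      (by norm_num) (by norm_num) (by norm_num) (fun s hs hsT => hin _ hsT (by
        rw [e.lowerHalf.α_add]; linarith [hs.1]) (by
        rw [e.lowerHalf.β_add]; linarith [hs.1])) with ⟨x, hx, hxc⟩ | ⟨h, -⟩
    · exact ⟨x, by rwa [union_assoc, hQ] at hx, hxc⟩
    · have := h.2.2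
      rw [e.lowerHalf.α_add, e.lowerHalf.β_add] at this
      linarith
  have hbT : b ∈ e.lowerHalf.T := by
    rw [← hQ] at hb
    exact hb.elim (fun h => (hbK (Or.inl h)).elim) fun h => h.resolve_left fun h => hbK (Or.inr h)
  have hα : 0 < e.lowerHalf.α b := by
    refine hbT.1.lt_of_ne fun h => hbK (Or.inr ?_)
    obtain ⟨h1, h2, h3⟩ := hbT
    simp only [T, lowerHalf, upperHalf, mem_ofPred_eq] at h h1 h2 h3 ⊢
    refine ⟨?_, ?_, ?_⟩ <;> linarith
  rcases hbT.2.1.eq_or_lt with hβ | hβ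
  · -- a point on the vertical leg is moved slightly into the triangle
    set γ : ℝ → ℂ := fun s => b + ((-s) • e.lowerHalf.w₁ + s • e.lowerHalf.w₂) with hγ
    have hγc : Continuous γ := by fun_prop
    have hev : ∀ᶠ s in 𝓝 (0 : ℝ), γ s ∈ (X ∪ e.upperHalf.T)ᶜ :=
      hγc.continuousAt.eventually (hK.isOpen_compl.mem_nhds (by simpa [hγ] using hbK))
    obtain ⟨δ, hδ, hball⟩ := Metric.eventually_nhds_iff.1 hev
    set s := min (δ / 2) (e.lowerHalf.α b / 2) with hs
    have hs0 : 0 < s := lt_min (by linarith) (by linarith)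
    have hsδ : s ≤ δ / 2 := min_le_left _ _
    have hsα : s ≤ e.lowerHalf.α b / 2 := min_le_right _ _
    have hmem : γ s ∈ connectedComponentIn (X ∪ e.upperHalf.T)ᶜ b := by
      have hpre : IsPreconnected (γ '' Icc 0 s) := isPreconnected_Icc.image _ hγc.continuousOn
      refine hpre.subset_connectedComponentIn ⟨0, ⟨le_rfl, hs0.le⟩, by simp [hγ]⟩ ?_
        ⟨s, ⟨hs0.le, le_rfl⟩, rfl⟩
      rintro _ ⟨r, hr, rfl⟩
      refine hball ?_
      rw [Real.dist_eq, sub_zero, abs_of_nonneg hr.1]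
      linarith [hr.2]
    have hγα : e.lowerHalf.α (γ s) = e.lowerHalf.α b + -s := e.lowerHalf.α_add _ _ _
    have hγβ : e.lowerHalf.β (γ s) = e.lowerHalf.β b + s := e.lowerHalf.β_add _ _ _
    rw [connectedComponentIn_eq hmem]
    exact hmain _ ⟨by linarith, by linarith, by linarith [hbT.2.2]⟩ (by linarith) (by linarith)
  · exact hmain b hbT hα hβ

/-- Domination extends across a parallelogram meeting the given set in at most three edges. -/
lemma exists_dominates_union_parallelogram {U X : Set ℂ} (hX : IsCompact X)
    (hXU : X ∪ e.Q ⊆ U) (hXQ : X ∩ e.Q ⊆ {z | e.α z = 0 ∨ e.α z = 1 ∨ e.β z = 1})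
    (hHF : HoleFree U (X ∪ e.Q)) {l : ℂ → ℝ} (hl : ContinuousOn l U) {F G : ℂ → ℂ}
    (hF : DifferentiableOn ℂ F U) (hG : DifferentiableOn ℂ G U) (h : Dominates l F G X)
    {ε : ℝ} (hε : 0 < ε) :
    ∃ F' G' : ℂ → ℂ, DifferentiableOn ℂ F' U ∧ DifferentiableOn ℂ G' U ∧
      (∀ z ∈ X, ‖F' z - F z‖ < ε) ∧ (∀ z ∈ X, ‖G' z - G z‖ < ε) ∧
      Dominates l F' G' (X ∪ e.Q) := by
  have hQ := e.upperHalf_union_lowerHalf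
  have hQ₁ : e.upperHalf.T ⊆ e.Q := hQ ▸ subset_union_left
  have hQ₂ : e.lowerHalf.T ⊆ e.Q := hQ ▸ subset_union_right
  obtain ⟨F₁, G₁, hF₁, hG₁, hFF₁, hGG₁, h₁⟩ := e.upperHalf.exists_dominates_union_triangle hX
    ((union_subset_union_right X hQ₁).trans hXU)
    (by
      rintro z ⟨hzX, hzT⟩
      refine ⟨hzT, ?_⟩
      have := hXQ ⟨hzX, hQ₁ hzT⟩
      simp only [T, upperHalf, mem_ofPred_eq] at this hzT ⊢
      rcases this with h | h | h
      · exact Or.inl h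
      · right; linarith
      · right; linarith)
    (holeFree_union_upperHalf hX.isClosed hXQ hHF) hl hF hG h (half_pos hε)
  have hassoc : X ∪ e.upperHalf.T ∪ e.lowerHalf.T = X ∪ e.Q := by rw [union_assoc, hQ]
  obtain ⟨F₂, G₂, hF₂, hG₂, hFF₂, hGG₂, h₂⟩ := e.lowerHalf.exists_dominates_union_triangle
    (X := X ∪ e.upperHalf.T) (hX.union e.upperHalf.isCompact_T)
    (by rwa [hassoc])
    (by
      rintro z ⟨hzX, hzT⟩
      refine ⟨hzT, ?_⟩
      rcases hzX with hzX | hzX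
      · have := hXQ ⟨hzX, hQ₂ hzT⟩
        simp only [T, lowerHalf, mem_ofPred_eq] at this hzT ⊢
        rcases this with h | h | h
        · left; linarith
        · right; linarith
        · right; linarith
      · simp only [T, lowerHalf, upperHalf, mem_ofPred_eq] at hzX hzT ⊢
        left; linarith [hzX.2.2])
    (by rwa [hassoc]) hl hF₁ hG₁ h₁ (half_pos hε)
  refine ⟨F₂, G₂, hF₂, hG₂, fun z hz => ?_, fun z hz => ?_, hassoc ▸ h₂⟩
  · linarith [norm_sub_le_norm_sub_add_norm_sub (F₂ z) (F₁ z) (F z), hFF₁ z hz,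
      hFF₂ z (Or.inl hz)]
  · linarith [norm_sub_le_norm_sub_add_norm_sub (G₂ z) (G₁ z) (G z), hGG₁ z hz,
      hGG₂ z (Or.inl hz)]

end AffineCoords

/-- The closed square with index `p` in the square grid of mesh `1 / c`. -/
def cell (c : ℝ) (p : ℤ × ℤ) : Set ℂ :=
  {z | p.1 ≤ c * z.re ∧ c * z.re ≤ p.1 + 1 ∧ p.2 ≤ c * z.im ∧ c * z.im ≤ p.2 + 1}

/-- The union of the grid squares with index in `S`. -/
def cells (c : ℝ) (S : Set (ℤ × ℤ)) : Set ℂ := ⋃ p ∈ S, cell c p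

/-- Two grid squares are adjacent if they share an edge. -/
def CellAdj (p q : ℤ × ℤ) : Prop :=
  q = (p.1 + 1, p.2) ∨ q = (p.1 - 1, p.2) ∨ q = (p.1, p.2 + 1) ∨ q = (p.1, p.2 - 1)

/-- Paths of adjacent grid squares outside `S`. -/
abbrev CellReach (S : Set (ℤ × ℤ)) : ℤ × ℤ → ℤ × ℤ → Prop :=
  Relation.ReflTransGen fun p q => CellAdj p q ∧ q ∉ S

/-- Every grid square outside `S` is joined outside `S` to a square not contained in `U`, or to
squares arbitrarily far away. -/
def CellAccessible (U : Set ℂ) (c : ℝ) (S : Set (ℤ × ℤ)) : Prop :=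
  ∀ q ∉ S, ∀ N : ℤ, ∃ r, CellReach S q r ∧ (¬ cell c r ⊆ U ∨ N < |r.1| ∨ N < |r.2|)

lemma mem_cells {c : ℝ} {S : Set (ℤ × ℤ)} {z : ℂ} : z ∈ cells c S ↔ ∃ p ∈ S, z ∈ cell c p := by
  simp [cells]

lemma cells_insert (c : ℝ) (S : Set (ℤ × ℤ)) (a : ℤ × ℤ) :
    cells c (insert a S) = cells c S ∪ cell c a := by
  simp [cells, union_comm]

namespace AffineCoords

/-- Coordinates whose parallelogram is a given grid square. -/
noncomputable def grid {c : ℝ} (hc : 0 < c) (p : ℤ × ℤ) : AffineCoords where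
  α z := c * z.re - p.1
  β z := c * z.im - p.2
  w₁ := (c⁻¹ : ℝ)
  w₂ := (c⁻¹ : ℝ) * Complex.I
  continuous_α := by fun_prop
  continuous_β := by fun_prop
  α_add z s t := by
    simp
    field_simp
    ring
  β_add z s t := by
    simp
    field_simp
    ring
  ext z z' h h' := Complex.ext (mul_left_cancel₀ hc.ne' (by linarith))
    (mul_left_cancel₀ hc.ne' (by linarith))

/-- The coordinates in the other order. -/
def swap (e : AffineCoords) : AffineCoords where
  α := e.β
  β := e.α
  w₁ := e.w₂
  w₂ := e.w₁
  continuous_α := e.continuous_β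
  continuous_β := e.continuous_α
  α_add z s t := by rw [add_comm (s • _), e.β_add]
  β_add z s t := by rw [add_comm (s • _), e.α_add]
  ext z z' h h' := e.ext z z' h' h

lemma Q_grid {c : ℝ} (hc : 0 < c) (p : ℤ × ℤ) : (grid hc p).Q = cell c p := by
  ext z
  simp only [Q, grid, cell, mem_ofPred_eq]
  constructor <;> rintro ⟨h1, h2, h3, h4⟩ <;> refine ⟨?_, ?_, ?_, ?_⟩ <;> linarith

lemma Q_swap (e : AffineCoords) : e.swap.Q = e.Q := by
  ext z
  simp only [Q, swap, mem_ofPred_eq]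
  tauto

lemma Q_upperHalf (e : AffineCoords) : e.upperHalf.Q = e.Q := by
  ext z
  simp only [Q, upperHalf, mem_ofPred_eq]
  constructor <;> rintro ⟨h1, h2, h3, h4⟩ <;> refine ⟨?_, ?_, ?_, ?_⟩ <;> linarith

/-- Coordinates of a grid square adapted to an edge shared with a square outside `S`. -/
lemma exists_adapted {c : ℝ} (hc : 0 < c) {S : Set (ℤ × ℤ)} {a b : ℤ × ℤ} (hab : CellAdj a b)
    (ha : a ∉ S) (hb : b ∉ S) : ∃ e : AffineCoords, e.Q = cell c a ∧
      cells c S ∩ e.Q ⊆ {z | e.α z = 0 ∨ e.α z = 1 ∨ e.β z = 1} := by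
  have coord : ∀ {m n : ℤ} {x : ℝ}, (m : ℝ) ≤ x → x ≤ m + 1 → (n : ℝ) ≤ x → x ≤ n + 1 →
      m = n ∨ (m = n - 1 ∧ x = n) ∨ (m = n + 1 ∧ x = n + 1) := by
    intro m n x h1 h2 h3 h4
    have h5 : m ≤ n + 1 := by exact_mod_cast h1.trans h4
    have h6 : n ≤ m + 1 := by exact_mod_cast h3.trans h2
    obtain rfl | rfl | rfl : m = n ∨ m = n - 1 ∨ m = n + 1 := by lia
    · exact Or.inl rfl
    · push_cast at h2
      exact Or.inr (Or.inl ⟨rfl, by linarith⟩)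
    · push_cast at h1
      exact Or.inr (Or.inr ⟨rfl, by linarith⟩)
  have key : ∀ {z}, z ∈ cells c S → z ∈ cell c a → ∃ p ∈ S,
      (p.1 = a.1 ∨ (p.1 = a.1 - 1 ∧ c * z.re = a.1) ∨ (p.1 = a.1 + 1 ∧ c * z.re = a.1 + 1)) ∧
      (p.2 = a.2 ∨ (p.2 = a.2 - 1 ∧ c * z.im = a.2) ∨ (p.2 = a.2 + 1 ∧ c * z.im = a.2 + 1)) := by
    intro z hz hza
    obtain ⟨p, hp, hzp⟩ := mem_cells.1 hz
    exact ⟨p, hp, coord hzp.1 hzp.2.1 hza.1 hza.2.1,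
      coord hzp.2.2.1 hzp.2.2.2 hza.2.2.1 hza.2.2.2⟩
  rcases hab with rfl | rfl | rfl | rfl
  · have hQ : (grid hc a).swap.upperHalf.Q = cell c a := by rw [Q_upperHalf, Q_swap, Q_grid]
    refine ⟨_, hQ, ?_⟩
    rw [hQ]
    rintro z ⟨hz, hza⟩
    obtain ⟨⟨p₁, p₂⟩, hp, h1, h2⟩ := key hz hza
    simp only [mem_ofPred_eq, grid, swap, upperHalf]
    grind
  · have hQ : (grid hc a).swap.Q = cell c a := by rw [Q_swap, Q_grid]
    refine ⟨_, hQ, ?_⟩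
    rw [hQ]
    rintro z ⟨hz, hza⟩
    obtain ⟨⟨p₁, p₂⟩, hp, h1, h2⟩ := key hz hza
    simp only [mem_ofPred_eq, grid, swap]
    grind
  · have hQ : (grid hc a).upperHalf.Q = cell c a := by rw [Q_upperHalf, Q_grid]
    refine ⟨_, hQ, ?_⟩
    rw [hQ]
    rintro z ⟨hz, hza⟩
    obtain ⟨⟨p₁, p₂⟩, hp, h1, h2⟩ := key hz hza
    simp only [mem_ofPred_eq, grid, upperHalf]
    grind
  · have hQ : (grid hc a).Q = cell c a := Q_grid hc a
    refine ⟨_, hQ, ?_⟩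
    rw [hQ]
    rintro z ⟨hz, hza⟩
    obtain ⟨⟨p₁, p₂⟩, hp, h1, h2⟩ := key hz hza
    simp only [mem_ofPred_eq, grid]
    grind

end AffineCoords

lemma isCompact_cell {c : ℝ} (hc : 0 < c) (p : ℤ × ℤ) : IsCompact (cell c p) := by
  rw [← AffineCoords.Q_grid hc, ← AffineCoords.upperHalf_union_lowerHalf]
  exact (AffineCoords.isCompact_T _).union (AffineCoords.isCompact_T _)

lemma isCompact_cells {c : ℝ} (hc : 0 < c) {S : Set (ℤ × ℤ)} (hS : S.Finite) :
    IsCompact (cells c S) :=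
  hS.isCompact_biUnion fun p _ => isCompact_cell hc p

/-- The centre of a grid square. -/
noncomputable def cellCenter (c : ℝ) (p : ℤ × ℤ) : ℂ := ⟨(p.1 + 1 / 2) / c, (p.2 + 1 / 2) / c⟩

lemma eq_of_mem_cell {c : ℝ} {p q : ℤ × ℤ} {z : ℂ} (h : z ∈ cell c q)
    (h1 : p.1 < c * z.re) (h2 : c * z.re < p.1 + 1) (h3 : p.2 < c * z.im)
    (h4 : c * z.im < p.2 + 1) : q = p := by
  have a1 : (q.1 : ℝ) < p.1 + 1 := h.1.trans_lt h2
  have a2 : (p.1 : ℝ) < q.1 + 1 := h1.trans_le h.2.1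
  have a3 : (q.2 : ℝ) < p.2 + 1 := h.2.2.1.trans_lt h4
  have a4 : (p.2 : ℝ) < q.2 + 1 := h3.trans_le h.2.2.2
  norm_cast at a1 a2 a3 a4
  exact Prod.ext (by lia) (by lia)

lemma segment_cellCenter_subset {c : ℝ} (hc : 0 < c) {S : Set (ℤ × ℤ)} {p : ℤ × ℤ} (hp : p ∉ S)
    {z : ℂ} (hz : z ∈ cell c p) (hzS : z ∉ cells c S) :
    segment ℝ (cellCenter c p) z ⊆ (cells c S)ᶜ := by
  rintro _ ⟨a, b, ha, hb, hab, rfl⟩ hw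
  rcases ha.eq_or_lt with rfl | ha
  · obtain rfl : b = 1 := by linarith
    simp only [zero_smul, one_smul, zero_add] at hw
    exact hzS hw
  · obtain ⟨q, hq, hwq⟩ := mem_cells.1 hw
    obtain ⟨h1, h2, h3, h4⟩ := hz
    have hre : c * (a • cellCenter c p + b • z).re = p.1 + a / 2 + b * (c * z.re - p.1) := by
      simp [cellCenter]
      field_simp
      linear_combination (2 * (p.1 : ℝ)) * hab
    have him : c * (a • cellCenter c p + b • z).im = p.2 + a / 2 + b * (c * z.im - p.2) := by
      simp [cellCenter]
      field_simp
      linear_combination (2 * (p.2 : ℝ)) * hab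
    refine hp (eq_of_mem_cell (p := p) hwq ?_ ?_ ?_ ?_ ▸ hq)
    · rw [hre]; nlinarith
    · rw [hre]; nlinarith
    · rw [him]; nlinarith
    · rw [him]; nlinarith

lemma mem_connectedComponentIn_cellCenter {c : ℝ} (hc : 0 < c) {S : Set (ℤ × ℤ)} {p : ℤ × ℤ}
    (hp : p ∉ S) {z : ℂ} (hz : z ∈ cell c p) (hzS : z ∉ cells c S) :
    z ∈ connectedComponentIn (cells c S)ᶜ (cellCenter c p) :=
  (convex_segment (𝕜 := ℝ) _ _).isPreconnected.subset_connectedComponentIn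
    (left_mem_segment ℝ _ _) (segment_cellCenter_subset hc hp hz hzS) (right_mem_segment ℝ _ _)

lemma exists_mem_cell_inter {c : ℝ} (hc : 0 < c) {S : Set (ℤ × ℤ)} {p q : ℤ × ℤ} (hp : p ∉ S)
    (hq : q ∉ S) (hpq : CellAdj p q) : ∃ z, z ∈ cell c p ∧ z ∈ cell c q ∧ z ∉ cells c S := by
  refine ⟨⟨((p.1 + q.1 + 1) / 2) / c, ((p.2 + q.2 + 1) / 2) / c⟩, ?_, ?_, fun h => ?_⟩
  · simp only [cell, mem_ofPred_eq, mul_div_cancel₀ _ hc.ne']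
    rcases hpq with rfl | rfl | rfl | rfl <;> push_cast <;>
      refine ⟨?_, ?_, ?_, ?_⟩ <;> linarith
  · simp only [cell, mem_ofPred_eq, mul_div_cancel₀ _ hc.ne']
    rcases hpq with rfl | rfl | rfl | rfl <;> push_cast <;>
      refine ⟨?_, ?_, ?_, ?_⟩ <;> linarith
  · obtain ⟨r, hr, hzr⟩ := mem_cells.1 h
    simp only [cell, mem_ofPred_eq, mul_div_cancel₀ _ hc.ne'] at hzr
    obtain ⟨h1, h2, h3, h4⟩ := hzr
    rw [le_div_iff₀ two_pos] at h1 h3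
    rw [div_le_iff₀ two_pos] at h2 h4
    norm_cast at h1 h2 h3 h4
    have : r = p ∨ r = q := by
      rw [Prod.ext_iff, Prod.ext_iff]
      rcases hpq with rfl | rfl | rfl | rfl <;> simp only at h1 h2 h3 h4 ⊢ <;> lia
    rcases this with rfl | rfl
    · exact hp hr
    · exact hq hr

lemma CellReach.notMem {S : Set (ℤ × ℤ)} {p q : ℤ × ℤ} (h : CellReach S p q) (hp : p ∉ S) :
    q ∉ S := by
  induction h with
  | refl => exact hp
  | tail _ h _ => exact h.2

lemma CellReach.mem_connectedComponentIn {c : ℝ} (hc : 0 < c) {S : Set (ℤ × ℤ)} {p q : ℤ × ℤ}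
    (h : CellReach S p q) (hp : p ∉ S) {z : ℂ} (hz : z ∈ cell c q) (hzS : z ∉ cells c S) :
    z ∈ connectedComponentIn (cells c S)ᶜ (cellCenter c p) := by
  induction h generalizing z with
  | refl => exact mem_connectedComponentIn_cellCenter hc hp hz hzS
  | @tail q r hpq hqr ih =>
    obtain ⟨w, hwq, hwr, hwS⟩ := exists_mem_cell_inter hc (CellReach.notMem hpq hp) hqr.2 hqr.1
    rw [connectedComponentIn_eq (ih hwq hwS),
      ← connectedComponentIn_eq (mem_connectedComponentIn_cellCenter hc hqr.2 hwr hwS)]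
    exact mem_connectedComponentIn_cellCenter hc hqr.2 hz hzS

lemma mem_cell_floor {c : ℝ} (z : ℂ) : z ∈ cell c (⌊c * z.re⌋, ⌊c * z.im⌋) :=
  ⟨Int.floor_le _, (Int.lt_floor_add_one _).le, Int.floor_le _, (Int.lt_floor_add_one _).le⟩

lemma cellCenter_mem_cell {c : ℝ} (hc : 0 < c) (p : ℤ × ℤ) : cellCenter c p ∈ cell c p := by
  simp only [cell, cellCenter, mem_ofPred_eq, mul_div_cancel₀ _ hc.ne']
  refine ⟨?_, ?_, ?_, ?_⟩ <;> linarith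

lemma cellCenter_notMem_cells {c : ℝ} (hc : 0 < c) {S : Set (ℤ × ℤ)} {p : ℤ × ℤ} (hp : p ∉ S) :
    cellCenter c p ∉ cells c S := by
  intro h
  obtain ⟨q, hq, h⟩ := mem_cells.1 h
  refine hp (eq_of_mem_cell (p := p) h ?_ ?_ ?_ ?_ ▸ hq) <;>
    simp only [cellCenter, mul_div_cancel₀ _ hc.ne'] <;> linarith

lemma CellAccessible.holeFree {U : Set ℂ} {c : ℝ} (hc : 0 < c) {S : Set (ℤ × ℤ)}
    (hSU : cells c S ⊆ U) (h : CellAccessible U c S) : HoleFree U (cells c S) := by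
  intro b hb
  set q : ℤ × ℤ := (⌊c * b.re⌋, ⌊c * b.im⌋)
  have hbq : b ∈ cell c q := mem_cell_floor b
  have hq : q ∉ S := fun hq => hb (mem_cells.2 ⟨q, hq, hbq⟩)
  rw [← connectedComponentIn_eq (mem_connectedComponentIn_cellCenter hc hq hbq hb)]
  by_contra! hcon
  obtain ⟨hbd, hU⟩ := hcon
  obtain ⟨R, hR⟩ := hbd.exists_norm_le
  obtain ⟨r, hqr, hr⟩ := h q hq ⌈c * R + 1⌉
  rcases hr with hr | hr
  · obtain ⟨x, hx, hxU⟩ := not_subset.1 hr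
    exact hxU (hU x (hqr.mem_connectedComponentIn hc hq hx fun h => hxU (hSU h)))
  · have hrS := hqr.notMem hq
    have hle := hR _ (hqr.mem_connectedComponentIn hc hq (cellCenter_mem_cell hc r)
      (cellCenter_notMem_cells hc hrS))
    have h1 := (Complex.abs_re_le_norm _).trans hle
    have h2 := (Complex.abs_im_le_norm _).trans hle
    simp only [cellCenter, abs_div, abs_of_pos hc, div_le_iff₀ hc] at h1 h2
    have hN := Int.le_ceil (c * R + 1)
    rcases hr with hr | hr
    · have hr' : (⌈c * R + 1⌉ : ℝ) < |(r.1 : ℝ)| := by exact_mod_cast hr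
      have := abs_sub_abs_le_abs_sub (r.1 : ℝ) (-(1 / 2))
      rw [sub_neg_eq_add, abs_neg, abs_of_pos (by norm_num : (0 : ℝ) < 1 / 2)] at this
      linarith
    · have hr' : (⌈c * R + 1⌉ : ℝ) < |(r.2 : ℝ)| := by exact_mod_cast hr
      have := abs_sub_abs_le_abs_sub (r.2 : ℝ) (-(1 / 2))
      rw [sub_neg_eq_add, abs_neg, abs_of_pos (by norm_num : (0 : ℝ) < 1 / 2)] at this
      linarith

lemma CellReach.anti {S S' : Set (ℤ × ℤ)} (h : S ⊆ S') {p q : ℤ × ℤ} (hpq : CellReach S' p q) :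
    CellReach S p q :=
  Relation.ReflTransGen.mono (fun _ _ hab => ⟨hab.1, fun hb => hab.2 (h hb)⟩) p q hpq

lemma CellReach.exists_exit {S S' : Set (ℤ × ℤ)} {p q : ℤ × ℤ} (h : CellReach S p q)
    (hp : p ∈ S' \ S) (hq : q ∉ S') : ∃ a ∈ S' \ S, ∃ b ∉ S', CellAdj a b := by
  induction h with
  | refl => exact (hq hp.1).elim
  | @tail b d hpb hbd ih =>
    by_cases hb : b ∈ S'
    · exact ⟨b, ⟨hb, CellReach.notMem hpb hp.2⟩, d, hq, hbd.1⟩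
    · exact ih hb

lemma CellAccessible.exists_removable {U : Set ℂ} {c : ℝ} {S S' : Set (ℤ × ℤ)}
    (hS : CellAccessible U c S) (hS' : CellAccessible U c S') (hfin : S'.Finite)
    (hSU : cells c S' ⊆ U) (hne : (S' \ S).Nonempty) :
    ∃ a ∈ S' \ S, ∃ b ∉ S', CellAdj a b ∧ CellAccessible U c (S' \ {a}) := by
  obtain ⟨a₀, ha₀⟩ := hne
  obtain ⟨N, hN⟩ := (hfin.image fun p : ℤ × ℤ => max |p.1| |p.2|).bddAbove
  obtain ⟨r, hr, hrN⟩ := hS a₀ ha₀.2 N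
  have hrS : r ∉ S' := by
    intro h
    have h1 : max |r.1| |r.2| ≤ N := hN (mem_image_of_mem _ h)
    rcases hrN with h2 | h2 | h2
    · exact h2 fun z hz => hSU (mem_cells.2 ⟨r, h, hz⟩)
    · exact h2.not_ge ((le_max_left _ _).trans h1)
    · exact h2.not_ge ((le_max_right _ _).trans h1)
  obtain ⟨a, ha, b, hb, hab⟩ := hr.exists_exit ha₀ hrS
  refine ⟨a, ha, b, hb, hab, fun q hq M => ?_⟩
  by_cases hqS : q ∈ S'
  · obtain rfl : q = a := by
      by_contra h
      exact hq ⟨hqS, h⟩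
    obtain ⟨s, hs, hsM⟩ := hS' b hb M
    exact ⟨s, Relation.ReflTransGen.head ⟨hab, fun h => hb h.1⟩ (hs.anti sdiff_subset), hsM⟩
  · obtain ⟨s, hs, hsM⟩ := hS' q hqS M
    exact ⟨s, hs.anti sdiff_subset, hsM⟩

/-- Domination extends from a union of grid squares to a larger one. -/
lemma exists_dominates_cells {U : Set ℂ} {c : ℝ} (hc : 0 < c) {S S' : Set (ℤ × ℤ)}
    (hS : CellAccessible U c S) (hS' : CellAccessible U c S') (hSS' : S ⊆ S') (hfin : S'.Finite)
    (hSU : cells c S' ⊆ U) {l : ℂ → ℝ} (hl : ContinuousOn l U) {F G : ℂ → ℂ}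
    (hF : DifferentiableOn ℂ F U) (hG : DifferentiableOn ℂ G U)
    (h : Dominates l F G (cells c S)) {ε : ℝ} (hε : 0 < ε) :
    ∃ F' G' : ℂ → ℂ, DifferentiableOn ℂ F' U ∧ DifferentiableOn ℂ G' U ∧
      (∀ z ∈ cells c S, ‖F' z - F z‖ < ε) ∧ (∀ z ∈ cells c S, ‖G' z - G z‖ < ε) ∧
      Dominates l F' G' (cells c S') := by
  induction hn : (S' \ S).ncard generalizing S' ε with
  | zero =>
    obtain rfl : S = S' := hSS'.antisymm (sdiff_eq_empty.1 ((ncard_eq_zero (hfin.sdiff)).1 hn))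
    exact ⟨F, G, hF, hG, by simpa using fun _ _ => hε, by simpa using fun _ _ => hε, h⟩
  | succ n ih =>
    obtain ⟨a, ha, b, hb, hab, hacc⟩ := hS.exists_removable hS' hfin hSU
      (nonempty_of_ncard_ne_zero (by rw [hn]; exact n.succ_ne_zero))
    have hsub : S ⊆ S' \ {a} := fun p hp => ⟨hSS' hp, fun h => ha.2 (h ▸ hp)⟩
    have hins : insert a (S' \ {a}) = S' := insert_sdiff_self_of_mem ha.1
    have hcells : cells c S' = cells c (S' \ {a}) ∪ cell c a := by rw [← cells_insert, hins]
    obtain ⟨F₁, G₁, hF₁, hG₁, hFF₁, hGG₁, h₁⟩ := ih hacc hsub hfin.sdiff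
      ((hcells ▸ subset_union_left).trans hSU) (half_pos hε) (by
        rw [sdiff_sdiff_comm, ncard_sdiff_singleton_of_mem ha, hn, Nat.add_sub_cancel])
    obtain ⟨e, heQ, he⟩ := AffineCoords.exists_adapted hc (S := S' \ {a}) hab
      (fun h => h.2 rfl) (fun h => hb h.1)
    rw [← heQ] at hcells
    obtain ⟨F₂, G₂, hF₂, hG₂, hFF₂, hGG₂, h₂⟩ := AffineCoords.exists_dominates_union_parallelogram
      (isCompact_cells hc hfin.sdiff) (hcells ▸ hSU) he (hcells ▸ hS'.holeFree hc hSU) hl hF₁ hG₁ h₁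
      (half_pos hε)
    have hsub' : cells c S ⊆ cells c (S' \ {a}) := biUnion_subset_biUnion_left hsub
    refine ⟨F₂, G₂, hF₂, hG₂, fun z hz => ?_, fun z hz => ?_, hcells ▸ h₂⟩
    · linarith [norm_sub_le_norm_sub_add_norm_sub (F₂ z) (F₁ z) (F z), hFF₁ z hz,
        hFF₂ z (hsub' hz)]
    · linarith [norm_sub_le_norm_sub_add_norm_sub (G₂ z) (G₁ z) (G z), hGG₁ z hz,
        hGG₂ z (hsub' hz)]

/-- The square box of half-width `N` in the index set. -/
def indexBox (N : ℤ) : Set (ℤ × ℤ) := Ico (-N) N ×ˢ Ico (-N) N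

lemma finite_indexBox (N : ℤ) : (indexBox N).Finite := (finite_Ico _ _).prod (finite_Ico _ _)

lemma cellReach_ray {S : Set (ℤ × ℤ)} {q d : ℤ × ℤ} (hd : ∀ p, CellAdj p (p + d))
    (h : ∀ k : ℕ, q + k • d ∉ S) (k : ℕ) : CellReach S q (q + k • d) := by
  induction k with
  | zero => simpa using Relation.ReflTransGen.refl
  | succ k ih =>
    refine ih.tail ⟨?_, h _⟩
    rw [succ_nsmul, ← add_assoc]
    exact hd _

lemma cellAccessible_inter_indexBox {U : Set ℂ} {c : ℝ} {S : Set (ℤ × ℤ)} (N : ℤ)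
    (h : ∀ q ∉ S, ∃ r, CellReach S q r ∧ ¬ cell c r ⊆ U) :
    CellAccessible U c (S ∩ indexBox N) := by
  intro q hq M
  by_cases hqS : q ∈ S
  · have hqN : ¬ (-N ≤ q.1 ∧ q.1 < N ∧ -N ≤ q.2 ∧ q.2 < N) := fun ⟨h1, h2, h3, h4⟩ =>
      hq ⟨hqS, ⟨h1, h2⟩, ⟨h3, h4⟩⟩
    have hcases : q.1 < -N ∨ N ≤ q.1 ∨ q.2 < -N ∨ N ≤ q.2 := by lia
    obtain ⟨k, h1, h2, h3, h4⟩ : ∃ k : ℕ,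
        M + q.1 < k ∧ M - q.1 < k ∧ M + q.2 < k ∧ M - q.2 < k := by
      refine ⟨(M + |q.1| + |q.2| + 1).toNat, ?_⟩
      have := Int.self_le_toNat (M + |q.1| + |q.2| + 1)
      have := abs_nonneg q.1
      have := abs_nonneg q.2
      have := le_abs_self q.1
      have := neg_le_abs q.1
      have := le_abs_self q.2
      have := neg_le_abs q.2
      refine ⟨?_, ?_, ?_, ?_⟩ <;> linarith
    rcases hcases with h | h | h | h
    · refine ⟨q + k • (-1, 0), cellReach_ray (fun p => Or.inr (Or.inl ?_)) (fun j hj => ?_) k, ?_⟩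
      · ext <;> simp [sub_eq_add_neg]
      · have := hj.2.1.1
        simp at this
        lia
      · right; left
        simp [lt_abs]
        lia
    · refine ⟨q + k • (1, 0), cellReach_ray (fun p => Or.inl ?_) (fun j hj => ?_) k, ?_⟩
      · ext <;> simp
      · have := hj.2.1.2
        simp at this
        lia
      · right; left
        simp [lt_abs]
        lia
    · refine ⟨q + k • (0, -1), cellReach_ray (fun p => Or.inr (Or.inr (Or.inr ?_)))
        (fun j hj => ?_) k, ?_⟩
      · ext <;> simp [sub_eq_add_neg]
      · have := hj.2.2.1
        simp at this
        lia
      · right; right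
        simp [lt_abs]
        lia
    · refine ⟨q + k • (0, 1), cellReach_ray (fun p => Or.inr (Or.inr (Or.inl ?_)))
        (fun j hj => ?_) k, ?_⟩
      · ext <;> simp
      · have := hj.2.2.2
        simp at this
        lia
      · right; right
        simp [lt_abs]
        lia
  · obtain ⟨r, hr, hrU⟩ := h q hqS
    exact ⟨r, hr.anti inter_subset_left, Or.inl hrU⟩

/-- The indices of the grid squares contained in `U`. -/
def innerCells (U : Set ℂ) (c : ℝ) : Set (ℤ × ℤ) := {p | cell c p ⊆ U}

/-- The index of the grid square containing a given square of the grid with half the mesh. -/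
def cellParent (p : ℤ × ℤ) : ℤ × ℤ := (p.1 / 2, p.2 / 2)

lemma cells_innerCells_subset {U : Set ℂ} {c : ℝ} (A : Set (ℤ × ℤ)) :
    cells c (innerCells U c ∩ A) ⊆ U :=
  iUnion₂_subset fun _ hp => hp.1

lemma cellAccessible_innerCells (U : Set ℂ) (c : ℝ) (N : ℤ) :
    CellAccessible U c (innerCells U c ∩ indexBox N) :=
  cellAccessible_inter_indexBox N fun q hq => ⟨q, .refl, hq⟩

lemma cell_subset_cell_cellParent {c : ℝ} (p : ℤ × ℤ) :
    cell (2 * c) p ⊆ cell c (cellParent p) := by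
  rintro z ⟨h1, h2, h3, h4⟩
  have a1 : (2 * (p.1 / 2 : ℤ) : ℝ) ≤ p.1 := by exact_mod_cast (by lia : 2 * (p.1 / 2) ≤ p.1)
  have a2 : (p.1 : ℝ) ≤ 2 * (p.1 / 2 : ℤ) + 1 := by
    exact_mod_cast (by lia : p.1 ≤ 2 * (p.1 / 2) + 1)
  have a3 : (2 * (p.2 / 2 : ℤ) : ℝ) ≤ p.2 := by exact_mod_cast (by lia : 2 * (p.2 / 2) ≤ p.2)
  have a4 : (p.2 : ℝ) ≤ 2 * (p.2 / 2 : ℤ) + 1 := by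
    exact_mod_cast (by lia : p.2 ≤ 2 * (p.2 / 2) + 1)
  refine ⟨?_, ?_, ?_, ?_⟩ <;> simp only [cellParent] <;> linarith

lemma exists_child_interval {m : ℤ} {x : ℝ} (h1 : m ≤ x) (h2 : x ≤ m + 1) :
    ∃ n : ℤ, n / 2 = m ∧ n ≤ 2 * x ∧ 2 * x ≤ n + 1 := by
  rcases le_total (2 * x) (2 * m + 1) with h | h
  · exact ⟨2 * m, by lia, by push_cast; linarith, by push_cast; linarith⟩
  · exact ⟨2 * m + 1, by lia, by push_cast; linarith, by push_cast; linarith⟩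

lemma exists_child_mem {c : ℝ} {q : ℤ × ℤ} {z : ℂ} (hz : z ∈ cell c q) :
    ∃ p, cellParent p = q ∧ z ∈ cell (2 * c) p := by
  obtain ⟨m, hm, hm1, hm2⟩ := exists_child_interval hz.1 hz.2.1
  obtain ⟨n, hn, hn1, hn2⟩ := exists_child_interval hz.2.2.1 hz.2.2.2
  refine ⟨(m, n), Prod.ext hm hn, ?_⟩
  simp only [cell, mem_ofPred_eq, mul_assoc]
  exact ⟨hm1, hm2, hn1, hn2⟩

lemma cells_preimage_cellParent (c : ℝ) (S : Set (ℤ × ℤ)) :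
    cells (2 * c) (cellParent ⁻¹' S) = cells c S := by
  ext z
  simp only [mem_cells]
  constructor
  · rintro ⟨p, hp, hz⟩
    exact ⟨_, hp, cell_subset_cell_cellParent p hz⟩
  · rintro ⟨q, hq, hz⟩
    obtain ⟨p, rfl, hzp⟩ := exists_child_mem hz
    exact ⟨p, hq, hzp⟩

lemma preimage_cellParent_indexBox (N : ℤ) :
    cellParent ⁻¹' indexBox N = indexBox (2 * N) := by
  ext p
  simp only [cellParent, indexBox, mem_preimage, mem_prod, mem_Ico]
  lia

lemma cellAccessible_preimage_cellParent (U : Set ℂ) (c : ℝ) (N : ℤ) :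
    CellAccessible U (2 * c) (cellParent ⁻¹' (innerCells U c ∩ indexBox N)) := by
  rw [preimage_inter, preimage_cellParent_indexBox]
  refine cellAccessible_inter_indexBox _ fun q hq => ?_
  obtain ⟨z, hz, hzU⟩ := not_subset.1 (show ¬ cell c (cellParent q) ⊆ U from hq)
  obtain ⟨r, hrq, hzr⟩ := exists_child_mem hz
  refine ⟨r, ?_, fun h => hzU (h hzr)⟩
  have hpar : r.1 / 2 = q.1 / 2 ∧ r.2 / 2 = q.2 / 2 := Prod.ext_iff.1 hrq
  have hmid : cellParent (r.1, q.2) = cellParent q := Prod.ext hpar.1 rfl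
  have h1 : CellReach (cellParent ⁻¹' innerCells U c) q (r.1, q.2) := by
    by_cases h : r.1 = q.1
    · rw [h]
    · refine .single ⟨?_, by rwa [mem_preimage, hmid]⟩
      simp only [CellAdj, Prod.mk.injEq]
      lia
  refine h1.trans ?_
  by_cases h : r.2 = q.2
  · rw [← h]
  · refine .single ⟨?_, by rwa [mem_preimage, hrq]⟩
    simp only [CellAdj, Prod.ext_iff]
    lia

/-- A compact exhaustion of `U` by unions of dyadic squares. -/
def dyadicExhaustion (U : Set ℂ) (n : ℕ) : Set ℂ :=
  cells (2 ^ n) (innerCells U (2 ^ n) ∩ indexBox (4 ^ n))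

lemma exists_dominates_dyadicExhaustion_zero {U : Set ℂ} {l : ℂ → ℝ} (hl : ContinuousOn l U) :
    ∃ F G : ℂ → ℂ, DifferentiableOn ℂ F U ∧ DifferentiableOn ℂ G U ∧
      Dominates l F G (dyadicExhaustion U 0) := by
  have hempty : CellAccessible U (2 ^ 0) (∅ : Set (ℤ × ℤ)) := by
    have := cellAccessible_innerCells U (2 ^ 0) 0
    rwa [indexBox, neg_zero, Ico_self, empty_prod, inter_empty] at this
  obtain ⟨F, G, hF, hG, -, -, h⟩ := exists_dominates_cells (by positivity) hempty
    (cellAccessible_innerCells U (2 ^ 0) (4 ^ 0)) (empty_subset _)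
    ((finite_indexBox _).inter_of_right _) (cells_innerCells_subset _) hl
    (differentiableOn_const 0) (differentiableOn_const 0)
    (fun z hz => by simp [cells] at hz) one_pos
  exact ⟨F, G, hF, hG, h⟩

lemma preimage_cellParent_subset (U : Set ℂ) (n : ℕ) :
    cellParent ⁻¹' (innerCells U (2 ^ n) ∩ indexBox (4 ^ n)) ⊆
      innerCells U (2 ^ (n + 1)) ∩ indexBox (4 ^ (n + 1)) := by
  rintro p ⟨hp, hpN⟩
  refine ⟨?_, ?_⟩
  · rw [pow_succ']
    exact (cell_subset_cell_cellParent p).trans hp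
  · have := (preimage_cellParent_indexBox (4 ^ n)).subset hpN
    simp only [indexBox, mem_prod, mem_Ico] at this ⊢
    rw [pow_succ]
    have : (0 : ℤ) < 4 ^ n := by positivity
    lia

lemma dyadicExhaustion_subset_succ (U : Set ℂ) (n : ℕ) :
    dyadicExhaustion U n ⊆ dyadicExhaustion U (n + 1) := by
  rw [dyadicExhaustion, ← cells_preimage_cellParent, ← pow_succ']
  exact biUnion_subset_biUnion_left (preimage_cellParent_subset U n)

lemma exists_dominates_dyadicExhaustion_succ {U : Set ℂ} {l : ℂ → ℝ} (hl : ContinuousOn l U)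
    {n : ℕ} {F G : ℂ → ℂ} (hF : DifferentiableOn ℂ F U) (hG : DifferentiableOn ℂ G U)
    (h : Dominates l F G (dyadicExhaustion U n)) {ε : ℝ} (hε : 0 < ε) :
    ∃ F' G' : ℂ → ℂ, (DifferentiableOn ℂ F' U ∧ DifferentiableOn ℂ G' U ∧
      Dominates l F' G' (dyadicExhaustion U (n + 1))) ∧
      (∀ z ∈ dyadicExhaustion U n, ‖F' z - F z‖ < ε) ∧
      (∀ z ∈ dyadicExhaustion U n, ‖G' z - G z‖ < ε) := by
  have hX : dyadicExhaustion U n =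
      cells (2 ^ (n + 1)) (cellParent ⁻¹' (innerCells U (2 ^ n) ∩ indexBox (4 ^ n))) := by
    rw [dyadicExhaustion, ← cells_preimage_cellParent, ← pow_succ']
  rw [hX] at h ⊢
  have hacc := cellAccessible_preimage_cellParent U (2 ^ n) (4 ^ n)
  rw [← pow_succ'] at hacc
  obtain ⟨F', G', hF', hG', hFF', hGG', h'⟩ := exists_dominates_cells (by positivity) hacc
    (cellAccessible_innerCells U (2 ^ (n + 1)) (4 ^ (n + 1))) (preimage_cellParent_subset U n)
    ((finite_indexBox _).inter_of_right _) (cells_innerCells_subset _) hl hF hG h hε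
  exact ⟨F', G', ⟨hF', hG', h'⟩, hFF', hGG'⟩

lemma exists_dyadicExhaustion_mem_nhds {U : Set ℂ} (hU : IsOpen U) {z : ℂ} (hz : z ∈ U) :
    ∃ n, dyadicExhaustion U n ∈ 𝓝 z := by
  obtain ⟨ρ, hρ, hball⟩ := Metric.isOpen_iff.1 hU z hz
  obtain ⟨n, hn⟩ := pow_unbounded_of_one_lt (4 / ρ + (‖z‖ + ρ)) (one_lt_two (α := ℝ))
  set c : ℝ := 2 ^ n with hc
  have hc0 : 0 < c := by positivity
  have h4 : (0 : ℝ) < 4 / ρ := by positivity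
  have hcz : ‖z‖ + ρ < c := by linarith
  have hcρ : 4 < c * ρ := by
    rw [← div_lt_iff₀ hρ]
    linarith [norm_nonneg z]
  have hc4 : ((4 ^ n : ℤ) : ℝ) = c * c := by
    push_cast
    rw [hc, ← mul_pow]
    norm_num
  refine ⟨n, Filter.mem_of_superset (Metric.ball_mem_nhds z (half_pos hρ)) fun w hw => ?_⟩
  rw [Metric.mem_ball, dist_eq_norm] at hw
  have hwc : ‖w‖ < c := by linarith [norm_le_norm_add_norm_sub z w, norm_sub_rev w z]
  refine mem_cells.2 ⟨(⌊c * w.re⌋, ⌊c * w.im⌋), ⟨fun v hv => hball ?_, ?_⟩, mem_cell_floor w⟩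
  · obtain ⟨v1, v2, v3, v4⟩ := hv
    obtain ⟨w1, w2, w3, w4⟩ := mem_cell_floor (c := c) w
    rw [← hc] at v1 v2 v3 v4
    have hre : c * |v.re - w.re| ≤ 1 := by
      nth_rw 1 [← abs_of_pos hc0]
      rw [← abs_mul, abs_le, mul_sub]
      constructor <;> linarith
    have him : c * |v.im - w.im| ≤ 1 := by
      nth_rw 1 [← abs_of_pos hc0]
      rw [← abs_mul, abs_le, mul_sub]
      constructor <;> linarith
    have hvw : ‖v - w‖ ≤ |v.re - w.re| + |v.im - w.im| :=
      Complex.norm_le_abs_re_add_abs_im (v - w)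
    have : ‖v - w‖ < ρ / 2 := by
      by_contra! hcon
      nlinarith
    rw [Metric.mem_ball, dist_eq_norm]
    linarith [norm_sub_le_norm_sub_add_norm_sub v w z]
  · have hre := abs_lt.1 ((Complex.abs_re_le_norm w).trans_lt hwc)
    have him := abs_lt.1 ((Complex.abs_im_le_norm w).trans_lt hwc)
    refine ⟨⟨Int.le_floor.2 ?_, Int.floor_lt.2 ?_⟩, Int.le_floor.2 ?_, Int.floor_lt.2 ?_⟩ <;>
      simp only [Int.cast_neg, hc4] <;> nlinarith

lemma exists_holomorphic_limit {U : Set ℂ} (hU : IsOpen U) {X : ℕ → Set ℂ} (hX : Monotone X)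
    (hXU : ∀ z ∈ U, ∃ n, X n ∈ 𝓝 z) {F : ℕ → ℂ → ℂ} (hF : ∀ n, DifferentiableOn ℂ (F n) U)
    (h : ∀ n, ∀ z ∈ X n, ‖F (n + 1) z - F n z‖ < 1 / 2 / 2 ^ n) :
    ∃ f : ℂ → ℂ, DifferentiableOn ℂ f U ∧ ∀ n, ∀ z ∈ X n, ‖f z - F n z‖ ≤ 1 / 2 ^ n := by
  have hstep : ∀ n, ∀ z ∈ X n, ∀ k,
      dist (F (n + k) z) (F (n + (k + 1)) z) ≤ 1 / 2 ^ n / 2 / 2 ^ k := by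
    intro n z hz k
    rw [dist_comm, dist_eq_norm]
    refine (h (n + k) z (hX (Nat.le_add_right n k) hz)).le.trans_eq ?_
    rw [pow_add]
    field_simp
  have hlim : ∀ n, ∀ z ∈ X n,
      Tendsto (fun k => F (n + k) z) atTop (𝓝 (limUnder atTop fun m => F m z)) := by
    intro n z hz
    obtain ⟨a, ha⟩ := cauchySeq_tendsto_of_complete (cauchySeq_of_le_geometric_two (hstep n z hz))
    have ha' : Tendsto (fun m => F m z) atTop (𝓝 a) := by
      rw [← tendsto_add_atTop_iff_nat n]
      simpa only [add_comm] using ha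
    rwa [ha'.limUnder_eq]
  have hbound : ∀ n, ∀ z ∈ X n, ‖(limUnder atTop fun m => F m z) - F n z‖ ≤ 1 / 2 ^ n := by
    intro n z hz
    rw [← dist_eq_norm, dist_comm]
    exact dist_le_of_le_geometric_two_of_tendsto₀ (hstep n z hz) (hlim n z hz)
  refine ⟨fun z => limUnder atTop fun m => F m z, ?_, hbound⟩
  refine TendstoLocallyUniformlyOn.differentiableOn (F := F) (φ := atTop) ?_
    (Eventually.of_forall hF) hU
  rw [Metric.tendstoLocallyUniformlyOn_iff]
  intro ε hε z hz
  obtain ⟨n, hn⟩ := hXU z hz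
  obtain ⟨m, hm⟩ := exists_pow_lt_of_lt_one hε (by norm_num : (1 / 2 : ℝ) < 1)
  refine ⟨X n, mem_nhdsWithin_of_mem_nhds hn, ?_⟩
  filter_upwards [eventually_ge_atTop (max n m)] with k hk w hw
  rw [dist_eq_norm]
  refine (hbound k w (hX ((le_max_left _ _).trans hk) hw)).trans_lt (lt_of_le_of_lt ?_ hm)
  rw [← one_div_pow]
  exact pow_le_pow_of_le_one (by norm_num) (by norm_num) ((le_max_right _ _).trans hk)

/-- Every continuous function on a planar open set is dominated by the maximum of the real parts
of two holomorphic functions. -/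
theorem exists_max_re_gt {U : Set ℂ} (hU : IsOpen U) {l : ℂ → ℝ} (hl : ContinuousOn l U) :
    ∃ f g : ℂ → ℂ, DifferentiableOn ℂ f U ∧ DifferentiableOn ℂ g U ∧
      ∀ z ∈ U, l z < max (f z).re (g z).re := by
  have hl1 : ContinuousOn (fun z => l z + 1) U := hl.add continuousOn_const
  let σ : ℕ → Type := fun n => {p : (ℂ → ℂ) × (ℂ → ℂ) // DifferentiableOn ℂ p.1 U ∧
    DifferentiableOn ℂ p.2 U ∧ Dominates (fun z => l z + 1) p.1 p.2 (dyadicExhaustion U n)}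
  obtain ⟨F₀, G₀, h₀⟩ := exists_dominates_dyadicExhaustion_zero hl1
  have hnext : ∀ n (x : σ n), ∃ y : σ (n + 1),
      (∀ z ∈ dyadicExhaustion U n, ‖y.1.1 z - x.1.1 z‖ < 1 / 2 / 2 ^ n) ∧
      (∀ z ∈ dyadicExhaustion U n, ‖y.1.2 z - x.1.2 z‖ < 1 / 2 / 2 ^ n) := by
    rintro n ⟨⟨F, G⟩, hF, hG, h⟩
    obtain ⟨F', G', h', hFG⟩ := exists_dominates_dyadicExhaustion_succ hl1 hF hG h
      (by positivity : (0 : ℝ) < 1 / 2 / 2 ^ n)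
    exact ⟨⟨(F', G'), h'⟩, hFG⟩
  choose next hnextF hnextG using hnext
  let seq : ∀ n, σ n := fun n => Nat.rec ⟨(F₀, G₀), h₀⟩ (fun n x => next n x) n
  have hmono : Monotone (dyadicExhaustion U) :=
    monotone_nat_of_le_succ (dyadicExhaustion_subset_succ U)
  have hnhds : ∀ z ∈ U, ∃ n, dyadicExhaustion U n ∈ 𝓝 z := fun z hz =>
    exists_dyadicExhaustion_mem_nhds hU hz
  obtain ⟨f, hf, hfF⟩ := exists_holomorphic_limit hU hmono hnhds (F := fun n => (seq n).1.1)
    (fun n => (seq n).2.1) fun n => hnextF n (seq n)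
  obtain ⟨g, hg, hgG⟩ := exists_holomorphic_limit hU hmono hnhds (F := fun n => (seq n).1.2)
    (fun n => (seq n).2.2.1) fun n => hnextG n (seq n)
  refine ⟨f, g, hf, hg, fun z hz => ?_⟩
  obtain ⟨n, hn⟩ := hnhds z hz
  have hzn := mem_of_mem_nhds hn
  have hclose : ∀ {a b : ℂ}, ‖a - b‖ ≤ 1 / 2 ^ n → b.re - 1 ≤ a.re := by
    intro a b hab
    have h1 := (abs_le.1 ((Complex.abs_re_le_norm (a - b)).trans hab)).1
    have h2 : (1 / 2 ^ n : ℝ) ≤ 1 := by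
      rw [← one_div_pow]
      exact pow_le_one₀ (by norm_num) (by norm_num)
    rw [Complex.sub_re] at h1
    linarith
  rcases (seq n).2.2.2 z hzn with h | h
  · exact lt_max_of_lt_left (by linarith [hclose (hfF n z hzn)])
  · exact lt_max_of_lt_right (by linarith [hclose (hgG n z hzn)])

lemma exists_exhaustion_function {U : Set ℂ} (hU : IsOpen U) :
    ∃ l : ℂ → ℝ, ContinuousOn l U ∧
      ∀ C, ∃ B ⊆ U, IsCompact B ∧ ∀ z ∈ U, l z ≤ C → z ∈ B := by
  rcases eq_or_ne Uᶜ ∅ with hUc | hUc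
  · obtain rfl : U = univ := compl_empty_iff.1 hUc
    exact ⟨fun z => ‖z‖, continuous_norm.continuousOn, fun C => ⟨Metric.closedBall 0 C,
      subset_univ _, isCompact_closedBall _ _, fun z _ hz => by simpa using hz⟩⟩
  · have hne := nonempty_iff_ne_empty.2 hUc
    have hpos : ∀ z ∈ U, 0 < Metric.infDist z Uᶜ := fun z hz =>
      (hU.isClosed_compl.notMem_iff_infDist_pos hne).1 fun h => h hz
    have hcont := Metric.continuous_infDist_pt (s := Uᶜ)
    refine ⟨fun z => ‖z‖ + (Metric.infDist z Uᶜ)⁻¹, continuous_norm.continuousOn.add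
      (hcont.continuousOn.inv₀ fun z hz => (hpos z hz).ne'), fun C => ?_⟩
    refine ⟨Metric.closedBall 0 C ∩ {z | (|C| + 1)⁻¹ ≤ Metric.infDist z Uᶜ}, fun z hz => ?_,
      (isCompact_closedBall _ _).inter_right (isClosed_le continuous_const hcont),
      fun z hz hzC => ⟨?_, ?_⟩⟩
    · by_contra h
      have h1 := hz.2
      rw [mem_ofPred_eq, Metric.infDist_zero_of_mem h] at h1
      exact h1.not_gt (by positivity)
    · have := inv_pos.2 (hpos z hz)
      rw [mem_closedBall_zero_iff]
      linarith
    · refine inv_le_of_inv_le₀ (hpos z hz) ?_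
      linarith [norm_nonneg z, le_abs_self C]

lemma HarmonicOnC.of_re {U : Set ℂ} (hU : IsOpen U) {f : ℂ → ℂ} (hf : DifferentiableOn ℂ f U) :
    HarmonicOnC (fun z => (f z).re) U := by
  have hharm : ∀ z ∈ U, InnerProductSpace.HarmonicAt (fun z => (f z).re) z := fun z hz =>
    ((hf.analyticOnNhd hU) z hz).harmonicAt_re
  refine ⟨fun z hz => (hharm z hz).1.contDiffWithinAt, fun z hz => ?_⟩
  have hdiff : DifferentiableAt ℝ (fderiv ℝ fun z => (f z).re) z :=
    ((hharm z hz).1.fderiv_right (m := 1) (by norm_num)).differentiableAt (by norm_num)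
  have hlap := (hharm z hz).2.self_of_nhds
  rw [InnerProductSpace.laplacian_eq_iteratedFDeriv_complexPlane] at hlap
  simp only [iteratedFDeriv_two_apply, Pi.zero_apply] at hlap
  rw [fderiv_clm_apply hdiff (differentiableAt_const _),
    fderiv_clm_apply hdiff (differentiableAt_const _)]
  simpa using hlap

end

/-- **Proper harmonic maps into ℝ² from planar domains.**
Every nonempty connected open set `U ⊆ ℂ` admits a pair `h = (h₁, h₂)` of
functions harmonic on `U` such that `h : U → ℝ²` is a proper map, i.e. the
preimage of every compact subset of `ℝ²` is a compact subset of `U`.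
(Taking `U` the unit disk disproves the Schoen–Yau conjecture.) -/
theorem exists_proper_harmonic_map_to_R2
    (U : Set ℂ) (hU : IsOpen U) (hUne : U.Nonempty) (hUconn : IsConnected U) :
    ∃ h : ℂ → ℝ × ℝ,
      HarmonicOnC (fun z => (h z).1) U ∧
      HarmonicOnC (fun z => (h z).2) U ∧
      (∀ K : Set (ℝ × ℝ), IsCompact K →
        IsCompact {z : ℂ | z ∈ U ∧ h z ∈ K} ∧ {z : ℂ | z ∈ U ∧ h z ∈ K} ⊆ U) := by
  obtain ⟨l, hl, hlB⟩ := exists_exhaustion_function hU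
  obtain ⟨f, g, hf, hg, hfg⟩ := exists_max_re_gt hU hl
  refine ⟨fun z => ((f z).re, (g z).re), .of_re hU hf, .of_re hU hg,
    fun K hK => ⟨?_, fun z hz => hz.1⟩⟩
  obtain ⟨C, hC⟩ := hK.isBounded.exists_norm_le
  obtain ⟨B, hBU, hB, hlB⟩ := hlB C
  have hsub : {z : ℂ | z ∈ U ∧ ((f z).re, (g z).re) ∈ K} =
      B ∩ (fun z => ((f z).re, (g z).re)) ⁻¹' K := by
    ext z
    refine ⟨fun hz => ⟨hlB z hz.1 ?_, hz.2⟩, fun hz => ⟨hBU hz.1, hz.2⟩⟩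
    refine (hfg z hz.1).le.trans (le_trans ?_ (hC _ hz.2))
    exact max_le_max (le_abs_self _) (le_abs_self _)
  have hcont : ContinuousOn (fun z => ((f z).re, (g z).re)) B :=
    (continuousOn_re hBU hf).prodMk (continuousOn_re hBU hg)
  rw [hsub]
  exact hB.of_isClosed_subset (hcont.preimage_isClosed_of_isClosed hB.isClosed hK.isClosed)
    Set.inter_subset_left
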